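/- For every integer N ≥ 2, every real p > 1, all positive reals f, F with f^p ≤ F, and every κ with c(N,p)·(f^p/F)^{1/(p−1)} ≤ κ ≤ c(N,p), one has D_p(F,f,κ) = ((N^p − 1)/(N^p − N))·(F − c(N,p)^{p−1}·f^p/(p·κ^{p−1})), where D_p(F,f,κ) := inf { sup_{E measurable, μ(E)=κ} ∫_E (M_N φ)^p dμ : φ ≥ 0 measurable on [0,1), ∫ φ dμ = f, ∫ φ^p dμ = F }. -/

import Mathlib

open MeasureTheory Set Filter

/-- The `N`-adic interval `[k/N^m, (k+1)/N^m)` at level `m`. -/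
def adicItv (N m k : ℕ) : Set ℝ :=
  Set.Ico ((k : ℝ) / (N : ℝ) ^ m) (((k : ℝ) + 1) / (N : ℝ) ^ m)

/-- The average `(1/μ(I)) ∫_I |φ| dμ` of `φ` over the `N`-adic interval at level `m`, index `k`
(its measure is `N^{-m}`). -/
noncomputable def adicAvg (N : ℕ) (φ : ℝ → ℝ) (m k : ℕ) : ℝ :=
  (N : ℝ) ^ m * ∫ y in adicItv N m k, |φ y|

/-- The `N`-adic maximal operator on `[0,1)`:
`M_N φ(x) = sup { (1/μ(I)) ∫_I |φ| dμ : x ∈ I, I an N-adic interval }`. -/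
noncomputable def adicMax (N : ℕ) (φ : ℝ → ℝ) (x : ℝ) : ℝ :=
  sSup {r : ℝ | ∃ m k : ℕ, k < N ^ m ∧ x ∈ adicItv N m k ∧ r = adicAvg N φ m k}

/-- `sup { ∫_E (M_N φ)^p dμ : E ⊆ [0,1) measurable, μ(E) = κ }`. -/
noncomputable def supMeas (N : ℕ) (p κ : ℝ) (φ : ℝ → ℝ) : ℝ :=
  sSup {z : ℝ | ∃ E : Set ℝ, MeasurableSet E ∧ E ⊆ Set.Ico (0:ℝ) 1 ∧
    volume E = ENNReal.ofReal κ ∧ z = ∫ x in E, adicMax N φ x ^ p}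

/-- The Bellman function `D_p(F,f,κ)`: the infimum of
`sup { ∫_E (M_N φ)^p dμ : μ(E) = κ }` over all nonnegative measurable `φ` on `[0,1)`
with `∫ φ dμ = f` and `∫ φ^p dμ = F`. -/
noncomputable def Dp (N : ℕ) (p F f κ : ℝ) : ℝ :=
  sInf {y : ℝ | ∃ φ : ℝ → ℝ, Measurable φ ∧ (∀ x ∈ Set.Ico (0:ℝ) 1, 0 ≤ φ x) ∧
    (∫ x in Set.Ico (0:ℝ) 1, φ x) = f ∧ (∫ x in Set.Ico (0:ℝ) 1, φ x ^ p) = F ∧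
    y = supMeas N p κ φ}

/-!
Write `A = (N^p - 1) / (N^p - N)`, so that `c = (p - 1) / p * A`.

Lower bound. Let `x` be the average of `φ` over the level-`n` interval of a point and `y` the
running maximum of these averages, started at `t ≥ f`. The integral of `y^p - A y^(p-1) x` is
nondecreasing in `n`: refining the level with `y` fixed preserves it, because the expression is
linear in `x`, and then replacing `y` by `max y x` does not decrease it, because `x ≤ N y`. Here `A`
is chosen to give equality at `x = N y`, and convexity of `u^p` on `[1, N]` covers the rest. Since
`φ ≤ M φ` almost everywhere, the limit is `∫ max(t, M φ)^p ≥ t^p + A ∫ φ^p - A t^(p-1) f`. Choosing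
`t` so that a set `E` of measure `κ` lies between `{M φ > t}` and `{M φ ≥ t}` bounds `∫_E (M φ)^p`
from below, and Young's inequality minimizes the bound over `t`, at `t = c f / κ`.

Upper bound. Start from `l = c f / κ` on `[0, κ / c)`, of integral `f`. In each interval of a fine
level, push the mass of a piece `[0, y)` to the left end, by a factor `N^k` in height; this keeps
the mean and raises the `p`-th moment, to `F` for suitable `y` and `k`. The maximal function is then
at most `l` outside nested spikes whose contribution is a geometric series with sum
`A (F - l^p κ / c)`, up to one short interval of the fine level.
-/

section PointwiseInequalities

/-- The constant `(a^p - 1) / (a^p - a)` of the Bellman function, for a real homogeneity ratio `a`: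
the coefficient `A` for which `y^p - A y^(p-1) x` is unchanged when `y` is replaced by `x` in the
extreme case `x = a y`. -/
noncomputable def homogConst (a p : ℝ) : ℝ := (a ^ p - 1) / (a ^ p - a)

/-- The function `y^p - B y^(p-1) x` of a running maximum `y` and an average `x`, whose behaviour
under `y ↦ max y x` drives the lower bound. -/
noncomputable def bellmanPotential (B p y x : ℝ) : ℝ := y ^ p - B * (y ^ (p - 1) * x)

variable {a p x y : ℝ}

lemma rpow_eq_rpow_sub_one_mul (hp : 1 < p) (hx : 0 ≤ x) : x ^ p = x ^ (p - 1) * x := by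
  rw [← Real.rpow_add_one' hx (by linarith), sub_add_cancel]

lemma homogConst_pos (ha : 1 < a) (hp : 1 < p) : 0 < homogConst a p :=
  div_pos (by linarith [Real.self_lt_rpow_of_one_lt ha hp])
    (by linarith [Real.self_lt_rpow_of_one_lt ha hp])

lemma homogConst_sub_one (ha : 1 < a) (hp : 1 < p) :
    homogConst a p - 1 = (a - 1) / (a ^ p - a) := by
  have h : a ^ p - a ≠ 0 := by linarith [Real.self_lt_rpow_of_one_lt ha hp]
  rw [homogConst]
  field_simp
  ring

lemma sub_one_div_mul_homogConst_le_one (ha : 1 < a) (hp : 1 < p) :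
    (p - 1) / p * homogConst a p ≤ 1 := by
  have bernoulli := one_add_mul_self_le_rpow_one_add (s := a - 1) (by linarith) hp.le
  rw [add_sub_cancel] at bernoulli
  have h := Real.self_lt_rpow_of_one_lt ha hp
  rw [homogConst, div_mul_div_comm, div_le_one (by apply mul_pos <;> linarith)]
  linarith

-- Convexity of `u ↦ u ^ p` on `[1, a]`, with equality at both endpoints.
lemma homogConst_sub_one_mul_rpow_le (ha : 1 < a) (hp : 1 < p) (hx1 : 1 ≤ x) (hxa : x ≤ a) :
    (homogConst a p - 1) * x ^ p ≤ homogConst a p * x - 1 := by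
  have hden : 0 < a ^ p - a := by linarith [Real.self_lt_rpow_of_one_lt ha hp]
  have ha1 : 0 < a - 1 := by linarith
  have chord : x ^ p ≤ (a - x) / (a - 1) * 1 + (x - 1) / (a - 1) * a ^ p := by
    have h := (convexOn_rpow hp.le).2 (x := 1) (y := a) (by simp) (by simp; linarith)
      (div_nonneg (sub_nonneg.2 hxa) ha1.le) (div_nonneg (sub_nonneg.2 hx1) ha1.le)
      (by field_simp; ring)
    have hcomb : (a - x) / (a - 1) * 1 + (x - 1) / (a - 1) * a = x := by field_simp; ring
    simpa only [smul_eq_mul, Real.one_rpow, hcomb] using h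
  calc (homogConst a p - 1) * x ^ p
      ≤ (homogConst a p - 1) * ((a - x) / (a - 1) * 1 + (x - 1) / (a - 1) * a ^ p) := by
        gcongr
        rw [homogConst_sub_one ha hp]
        positivity
    _ = homogConst a p * x - 1 := by
        rw [homogConst_sub_one ha hp, homogConst]
        field_simp
        ring

lemma bellmanPotential_self (B : ℝ) (hp : 1 < p) (hx : 0 ≤ x) :
    bellmanPotential B p x x = (1 - B) * x ^ p := by
  rw [bellmanPotential, ← rpow_eq_rpow_sub_one_mul hp hx]
  ring

lemma bellmanPotential_le_max (ha : 1 < a) (hp : 1 < p) (hy : 0 < y) (hxy : x ≤ a * y) :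
    bellmanPotential (homogConst a p) p y x ≤ bellmanPotential (homogConst a p) p (max y x) x := by
  rcases le_total x y with h | h
  · rw [max_eq_left h]
  rw [max_eq_right h, bellmanPotential_self _ hp (hy.le.trans h), bellmanPotential]
  obtain ⟨u, rfl⟩ : ∃ u, x = u * y := ⟨x / y, by field_simp⟩
  have hu1 : 1 ≤ u := le_of_mul_le_mul_right (by simpa using h) hy
  have hua : u ≤ a := le_of_mul_le_mul_right hxy hy
  have key := mul_le_mul_of_nonneg_right (homogConst_sub_one_mul_rpow_le ha hp hu1 hua)
    (Real.rpow_nonneg hy.le p)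
  rw [Real.mul_rpow (by linarith) hy.le, mul_left_comm _ u, ← rpow_eq_rpow_sub_one_mul hp hy.le]
  linarith

lemma bellmanPotential_max_le (hp : 1 < p) (hy : 0 ≤ y) :
    bellmanPotential (p / (p - 1)) p (max y x) x ≤ bellmanPotential (p / (p - 1)) p y x := by
  rcases le_total x y with h | h
  · rw [max_eq_left h]
  rw [max_eq_right h, bellmanPotential_self _ hp (hy.trans h), bellmanPotential]
  have hp1 : 0 < p - 1 := by linarith
  have young := Real.young_inequality_of_nonneg (Real.rpow_nonneg hy (p - 1)) (hy.trans h)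
    (Real.HolderConjugate.conjExponent hp).symm
  rw [← Real.rpow_mul hy, Real.conjExponent, mul_div_cancel₀ _ hp1.ne'] at young
  calc (1 - p / (p - 1)) * x ^ p
      = y ^ p - p / (p - 1) * (y ^ p / (p / (p - 1)) + x ^ p / p) := by field_simp; ring
    _ ≤ y ^ p - p / (p - 1) * (y ^ (p - 1) * x) := by gcongr

lemma mul_rpow_sub_one_mul_le_half_add {q : ℝ} (hp : 1 < p) (hq : 0 ≤ q) (hy : 0 ≤ y)
    (hx : 0 ≤ x) :
    q * (y ^ (p - 1) * x) ≤ y ^ p / 2 + q * (2 * q) ^ (p - 1) * x ^ p := by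
  rw [rpow_eq_rpow_sub_one_mul hp hy, rpow_eq_rpow_sub_one_mul hp hx]
  rcases le_total (2 * q * x) y with h | h
  · have : 0 ≤ q * (2 * q) ^ (p - 1) * (x ^ (p - 1) * x) := by positivity
    nlinarith [mul_le_mul_of_nonneg_left h (Real.rpow_nonneg hy (p - 1))]
  · have hpow : y ^ (p - 1) ≤ (2 * q) ^ (p - 1) * x ^ (p - 1) := by
      rw [← Real.mul_rpow (by positivity) hx]
      exact Real.rpow_le_rpow hy h (by linarith)
    have : 0 ≤ y ^ (p - 1) * y := by positivity
    nlinarith [mul_le_mul_of_nonneg_left hpow (mul_nonneg hq hx)]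

lemma homogConst_mul_geom (ha : 1 < a) (hp : 1 < p) (k : ℕ) :
    ∑ j ∈ Finset.range k, ((a ^ p) ^ (j + 1) - (a ^ p) ^ j) / a ^ (j + 1) =
      homogConst a p * ((a ^ p / a) ^ k - 1) := by
  have h : a ^ p - a ≠ 0 := by linarith [Real.self_lt_rpow_of_one_lt ha hp]
  have ha0 : a ≠ 0 := by linarith
  have hne : a ^ p / a - 1 ≠ 0 := by rw [div_sub_one ha0]; exact div_ne_zero h ha0
  calc ∑ j ∈ Finset.range k, ((a ^ p) ^ (j + 1) - (a ^ p) ^ j) / a ^ (j + 1)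
      = ∑ j ∈ Finset.range k, (a ^ p - 1) / a * (a ^ p / a) ^ j := by
        refine Finset.sum_congr rfl fun j _ => ?_
        rw [div_pow]
        field_simp
        ring
    _ = homogConst a p * ((a ^ p / a) ^ k - 1) := by
        rw [← Finset.mul_sum, geom_sum_eq (sub_ne_zero.1 hne), homogConst]
        field_simp

end PointwiseInequalities

section AdicIntervals

/-- The index `k` of the level-`m` interval `adicItv N m k` containing a point `x ≥ 0`. -/
noncomputable def adicIndex (N m : ℕ) (x : ℝ) : ℕ := ⌊x * (N : ℝ) ^ m⌋₊

/-- The average of `|φ|` over the level-`m` interval containing `x`, i.e. the martingale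
`E[|φ| | level m]` evaluated at `x`. -/
noncomputable def levelAvg (N : ℕ) (φ : ℝ → ℝ) (m : ℕ) (x : ℝ) : ℝ :=
  adicAvg N φ m (adicIndex N m x)

variable {N m j k : ℕ} {x C : ℝ} {φ g : ℝ → ℝ}

lemma mem_adicItv_iff (hN : 0 < N) (hx : 0 ≤ x) : x ∈ adicItv N m k ↔ adicIndex N m x = k := by
  have hpos : (0 : ℝ) < (N : ℝ) ^ m := by positivity
  rw [adicIndex, Nat.floor_eq_iff (by positivity), adicItv, mem_Ico, div_le_iff₀ hpos,
    lt_div_iff₀ hpos]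

lemma mem_adicItv_adicIndex (hN : 0 < N) (hx : 0 ≤ x) : x ∈ adicItv N m (adicIndex N m x) :=
  (mem_adicItv_iff hN hx).2 rfl

lemma nonneg_of_mem_adicItv (hx : x ∈ adicItv N m k) : 0 ≤ x :=
  le_trans (by positivity) hx.1

lemma adicIndex_eq_of_mem (hN : 0 < N) (hx : x ∈ adicItv N m k) : adicIndex N m x = k :=
  (mem_adicItv_iff hN (nonneg_of_mem_adicItv hx)).1 hx

lemma measurable_adicIndex (N m : ℕ) : Measurable (adicIndex N m) :=
  Nat.measurable_floor.comp (measurable_id.mul_const _)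

lemma adicIndex_lt (hN : 0 < N) (hx : x < 1) : adicIndex N m x < N ^ m := by
  have hpos : (0 : ℝ) < (N : ℝ) ^ m := by positivity
  rw [adicIndex, Nat.floor_lt' (by positivity)]
  push_cast
  exact mul_lt_of_lt_one_left hpos hx

lemma adicIndex_div (hN : 0 < N) (m j : ℕ) (x : ℝ) :
    adicIndex N (m + j) x / N ^ j = adicIndex N m x := by
  have hpos : (N : ℝ) ≠ 0 := by positivity
  rw [adicIndex, adicIndex, ← Nat.floor_div_natCast, Nat.cast_pow, pow_add, ← mul_assoc,
    mul_div_cancel_right₀ _ (pow_ne_zero _ hpos)]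

lemma measurableSet_adicItv (N m k : ℕ) : MeasurableSet (adicItv N m k) := measurableSet_Ico

lemma volume_real_adicItv (N m k : ℕ) : volume.real (adicItv N m k) = 1 / (N : ℝ) ^ m := by
  rw [adicItv, Real.volume_real_Ico_of_le (by gcongr; linarith)]
  ring

lemma adicItv_subset_Ico (hN : 0 < N) (hk : k < N ^ m) : adicItv N m k ⊆ Ico 0 1 := by
  have hpos : (0 : ℝ) < (N : ℝ) ^ m := by positivity
  refine fun x hx => ⟨nonneg_of_mem_adicItv hx, hx.2.trans_le ?_⟩
  rw [div_le_one hpos]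
  exact_mod_cast hk

lemma adicItv_add_subset (hN : 0 < N) (m j k : ℕ) :
    adicItv N (m + j) k ⊆ adicItv N m (k / N ^ j) := fun x hx => by
  rw [mem_adicItv_iff hN (nonneg_of_mem_adicItv hx), ← adicIndex_div hN m j,
    adicIndex_eq_of_mem hN hx]

lemma pairwiseDisjoint_adicItv (hN : 0 < N) (m : ℕ) (s : Set ℕ) :
    s.PairwiseDisjoint (adicItv N m) := fun _ _ _ _ hne =>
  disjoint_left.2 fun _ hi hj =>
    hne ((adicIndex_eq_of_mem hN hi).symm.trans (adicIndex_eq_of_mem hN hj))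

lemma Ico_eq_biUnion_adicItv (hN : 0 < N) (m : ℕ) :
    Ico (0 : ℝ) 1 = ⋃ k ∈ Finset.range (N ^ m), adicItv N m k := by
  refine subset_antisymm (fun x hx => ?_) (iUnion₂_subset fun k hk =>
    adicItv_subset_Ico hN (Finset.mem_range.1 hk))
  exact mem_biUnion (Finset.mem_coe.2 (Finset.mem_range.2 (adicIndex_lt hN hx.2)))
    (mem_adicItv_adicIndex hN hx.1)

lemma setIntegral_Ico_eq_sum_adicItv (hN : 0 < N) (m : ℕ) (hg : IntegrableOn g (Ico 0 1)) :
    ∫ x in Ico (0 : ℝ) 1, g x = ∑ k ∈ Finset.range (N ^ m), ∫ x in adicItv N m k, g x := by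
  rw [Ico_eq_biUnion_adicItv hN m]
  exact integral_biUnion_finset _ (fun i _ => measurableSet_adicItv N m i)
    (pairwiseDisjoint_adicItv hN m _)
    fun i hi => hg.mono_set (adicItv_subset_Ico hN (Finset.mem_range.1 hi))

lemma adicMax_eq_iSup (hN : 0 < N) (φ : ℝ → ℝ) (hx : x ∈ Ico (0 : ℝ) 1) :
    adicMax N φ x = ⨆ m, levelAvg N φ m x := by
  unfold adicMax iSup
  congr 1
  ext r
  constructor
  · rintro ⟨m, k, -, hxk, rfl⟩
    exact ⟨m, by simp only [levelAvg, adicIndex_eq_of_mem hN hxk]⟩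
  · rintro ⟨m, rfl⟩
    exact ⟨m, _, adicIndex_lt hN hx.2, mem_adicItv_adicIndex hN hx.1, rfl⟩

lemma levelAvg_zero (N : ℕ) (φ : ℝ → ℝ) (hx : x ∈ Ico (0 : ℝ) 1) :
    levelAvg N φ 0 x = ∫ x in Ico (0 : ℝ) 1, |φ x| := by
  have h : adicIndex N 0 x = 0 := by simpa [adicIndex] using hx.2
  simp [levelAvg, adicAvg, h, adicItv]

lemma levelAvg_add_le (hN : 0 < N) (hφ : IntegrableOn φ (Ico 0 1)) (m j : ℕ)
    (hx : x < 1) : levelAvg N φ (m + j) x ≤ (N : ℝ) ^ j * levelAvg N φ m x := by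
  rw [levelAvg, levelAvg, adicAvg, adicAvg, pow_add, mul_comm (_ ^ m), mul_assoc,
    ← adicIndex_div hN m j]
  gcongr
  · exact ae_of_all _ fun _ => abs_nonneg _
  · refine IntegrableOn.mono_set hφ.abs (adicItv_subset_Ico hN ?_)
    rw [adicIndex_div hN]
    exact adicIndex_lt hN hx
  · exact adicItv_add_subset hN m j _

lemma factorsThrough_adicIndex_add (hN : 0 < N) (hg : g.FactorsThrough (adicIndex N m)) (j : ℕ) :
    g.FactorsThrough (adicIndex N (m + j)) :=
  fun x y hxy => hg (by rw [← adicIndex_div hN m j x, hxy, adicIndex_div hN])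

lemma factorsThrough_levelAvg (N : ℕ) (φ : ℝ → ℝ) (m : ℕ) :
    (levelAvg N φ m).FactorsThrough (adicIndex N m) :=
  fun _ _ h => congrArg (adicAvg N φ m) h

lemma measurable_of_factorsThrough (hg : g.FactorsThrough (adicIndex N m)) : Measurable g := by
  obtain ⟨e, rfl⟩ := (Function.factorsThrough_iff g).1 hg
  exact measurable_from_top.comp (measurable_adicIndex N m)

lemma measurable_levelAvg (N : ℕ) (φ : ℝ → ℝ) (m : ℕ) : Measurable (levelAvg N φ m) :=
  measurable_of_factorsThrough (factorsThrough_levelAvg N φ m)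

lemma exists_forall_abs_le_of_factorsThrough (hN : 0 < N)
    (hg : g.FactorsThrough (adicIndex N m)) : ∃ C, ∀ x ∈ Ico (0 : ℝ) 1, |g x| ≤ C := by
  obtain ⟨e, rfl⟩ := (Function.factorsThrough_iff g).1 hg
  exact ⟨∑ k ∈ Finset.range (N ^ m), |e k|, fun x hx =>
    Finset.single_le_sum (f := fun k => |e k|) (fun _ _ => abs_nonneg _)
      (Finset.mem_range.2 (adicIndex_lt hN hx.2))⟩

lemma integrableOn_mul_of_factorsThrough (hN : 0 < N) (hg : g.FactorsThrough (adicIndex N m))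
    (hφ : IntegrableOn φ (Ico 0 1)) : IntegrableOn (fun x => g x * φ x) (Ico 0 1) := by
  obtain ⟨C, hC⟩ := exists_forall_abs_le_of_factorsThrough hN hg
  refine Integrable.bdd_mul (c := C) hφ
    (measurable_of_factorsThrough hg).aestronglyMeasurable ?_
  filter_upwards [ae_restrict_mem measurableSet_Ico] with x hx
  exact hC x hx

lemma integrableOn_of_factorsThrough (hN : 0 < N) (hg : g.FactorsThrough (adicIndex N m)) :
    IntegrableOn g (Ico 0 1) := by
  simpa using integrableOn_mul_of_factorsThrough hN hg (φ := fun _ => 1) (by simp)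

lemma setIntegral_mul_levelAvg (hN : 0 < N) (hg : g.FactorsThrough (adicIndex N m))
    (hφ : IntegrableOn φ (Ico 0 1)) :
    ∫ x in Ico (0 : ℝ) 1, g x * levelAvg N φ m x = ∫ x in Ico (0 : ℝ) 1, g x * |φ x| := by
  rw [setIntegral_Ico_eq_sum_adicItv hN m (integrableOn_mul_of_factorsThrough hN hg hφ.abs),
    setIntegral_Ico_eq_sum_adicItv hN m (integrableOn_mul_of_factorsThrough hN hg
      (integrableOn_of_factorsThrough hN (factorsThrough_levelAvg N φ m)))]
  obtain ⟨e, rfl⟩ := (Function.factorsThrough_iff g).1 hg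
  refine Finset.sum_congr rfl fun k _ => ?_
  have : (0 : ℝ) < (N : ℝ) ^ m := by positivity
  calc ∫ x in adicItv N m k, (e ∘ adicIndex N m) x * levelAvg N φ m x
      = ∫ _ in adicItv N m k, e k * adicAvg N φ m k :=
        setIntegral_congr_fun (measurableSet_adicItv N m k) fun x hx => by
          simp only [Function.comp_apply, levelAvg, adicIndex_eq_of_mem hN hx]
    _ = ∫ x in adicItv N m k, e k * |φ x| := by
        rw [setIntegral_const, volume_real_adicItv, integral_const_mul, adicAvg, smul_eq_mul]
        field_simp
    _ = ∫ x in adicItv N m k, (e ∘ adicIndex N m) x * |φ x| :=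
        setIntegral_congr_fun (measurableSet_adicItv N m k) fun x hx => by
          simp only [Function.comp_apply, adicIndex_eq_of_mem hN hx]

lemma setIntegral_adicItv_levelAvg (hN : 0 < N) (hφ : IntegrableOn φ (Ico 0 1)) (m j : ℕ)
    (hk : k < N ^ m) :
    ∫ x in adicItv N m k, levelAvg N φ (m + j) x = ∫ x in adicItv N m k, |φ x| := by
  have hstep : Function.FactorsThrough (fun x => if adicIndex N m x = k then (1 : ℝ) else 0)
      (adicIndex N m) := fun x y hxy => by simp only [hxy]
  have restrict_eq (h : ℝ → ℝ) : ∫ x in adicItv N m k, h x =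
      ∫ x in Ico (0 : ℝ) 1, (if adicIndex N m x = k then 1 else 0) * h x := by
    rw [← inter_eq_right.2 (adicItv_subset_Ico hN hk),
      ← setIntegral_indicator (measurableSet_adicItv N m k)]
    refine setIntegral_congr_fun measurableSet_Ico fun x hx => ?_
    by_cases hxk : adicIndex N m x = k <;> simp [indicator, mem_adicItv_iff hN hx.1, hxk]
  rw [restrict_eq, restrict_eq,
    setIntegral_mul_levelAvg hN (factorsThrough_adicIndex_add hN hstep j) hφ]

lemma levelAvg_le_of_forall_levelAvg_add_le (hN : 0 < N) (hφ : IntegrableOn φ (Ico 0 1)) (m j : ℕ)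
    (h : ∀ x ∈ Ico (0 : ℝ) 1, levelAvg N φ (m + j) x ≤ C) (hx : x < 1) :
    levelAvg N φ m x ≤ C := by
  have hk := adicIndex_lt (m := m) hN hx
  have hpos : (0 : ℝ) < (N : ℝ) ^ m := by positivity
  have hsub := adicItv_subset_Ico hN hk
  rw [levelAvg, adicAvg, ← setIntegral_adicItv_levelAvg hN hφ m j hk]
  calc (N : ℝ) ^ m * ∫ x in adicItv N m (adicIndex N m x), levelAvg N φ (m + j) x
      ≤ (N : ℝ) ^ m * ∫ _ in adicItv N m (adicIndex N m x), C := by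
        refine mul_le_mul_of_nonneg_left (setIntegral_mono_on
          ((integrableOn_of_factorsThrough hN (factorsThrough_levelAvg N φ _)).mono_set hsub)
          (by simp [adicItv]) (measurableSet_adicItv N m _) fun y hy => h y (hsub hy)) hpos.le
    _ = C := by
        rw [setIntegral_const, volume_real_adicItv, smul_eq_mul]
        field_simp

lemma levelAvg_eq_setAverage_closedBall (N : ℕ) (φ : ℝ → ℝ) (m : ℕ) (x : ℝ) :
    levelAvg N φ m x = ⨍ y in Metric.closedBall
      ((adicIndex N m x + 1 / 2) / (N : ℝ) ^ m) ((1 / 2) / (N : ℝ) ^ m), |φ y| := by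
  have hleft : (adicIndex N m x + 1 / 2) / (N : ℝ) ^ m - (1 / 2) / (N : ℝ) ^ m =
      adicIndex N m x / (N : ℝ) ^ m := by ring
  have hright : (adicIndex N m x + 1 / 2) / (N : ℝ) ^ m + (1 / 2) / (N : ℝ) ^ m =
      (adicIndex N m x + 1) / (N : ℝ) ^ m := by ring
  rw [Real.closedBall_eq_Icc, hleft, hright, setAverage_eq, integral_Icc_eq_integral_Ico,
    Real.volume_real_Icc_of_le (by gcongr; linarith), levelAvg, adicAvg, adicItv, smul_eq_mul,
    ← sub_div, add_sub_cancel_left, one_div, inv_inv]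

lemma adicItv_subset_closedBall (N m k : ℕ) : adicItv N m k ⊆
    Metric.closedBall ((k + 1 / 2) / (N : ℝ) ^ m) ((1 / 2) / (N : ℝ) ^ m) := fun x hx => by
  have h₁ := hx.1
  have h₂ := hx.2
  rw [add_div] at h₂
  rw [Real.closedBall_eq_Icc, mem_Icc, add_div]
  have h₃ : (1 : ℝ) / N ^ m = 1 / 2 / N ^ m + 1 / 2 / N ^ m := by ring
  constructor <;> linarith

lemma ae_tendsto_levelAvg (hN : 1 < N) (hφ : IntegrableOn φ (Ico 0 1)) :
    ∀ᵐ x ∂volume.restrict (Ico (0 : ℝ) 1),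
      Tendsto (fun m => levelAvg N φ m x) atTop (nhds |φ x|) := by
  have hN1 : (1 : ℝ) < N := by exact_mod_cast hN
  have hN0 : 0 < N := by lia
  set ψ := (Ico (0 : ℝ) 1).indicator φ with hψ_def
  have hψ : LocallyIntegrable (fun y => |ψ y|) :=
    ((integrable_indicator_iff measurableSet_Ico).2 hφ).abs.locallyIntegrable
  have hradius : Tendsto (fun m : ℕ => (1 / 2 : ℝ) / (N : ℝ) ^ m) atTop (nhdsWithin 0 (Ioi 0)) :=
    tendsto_nhdsWithin_iff.2 ⟨(tendsto_pow_atTop_atTop_of_one_lt hN1).const_div_atTop _,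
      Eventually.of_forall fun m => by simp only [mem_Ioi]; positivity⟩
  filter_upwards [ae_restrict_of_ae (IsUnifLocDoublingMeasure.ae_tendsto_average volume hψ 1),
    ae_restrict_mem measurableSet_Ico] with x hx hx01
  have hψφ (y : ℝ) (hy : y ∈ Ico (0 : ℝ) 1) : |ψ y| = |φ y| := by
    rw [hψ_def, indicator_of_mem hy]
  rw [← hψφ x hx01]
  refine (hx (fun m => (adicIndex N m x + 1 / 2) / (N : ℝ) ^ m) _ hradius
    (Eventually.of_forall fun m => ?_)).congr fun m => ?_
  · rw [one_mul]
    exact adicItv_subset_closedBall N m _ (mem_adicItv_adicIndex hN0 hx01.1)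
  · rw [← levelAvg_eq_setAverage_closedBall, levelAvg, levelAvg, adicAvg, adicAvg,
      setIntegral_congr_fun (measurableSet_adicItv N m _) fun y hy =>
        hψφ y (adicItv_subset_Ico hN0 (adicIndex_lt hN0 hx01.2) hy)]

end AdicIntervals

section RunningMaximum

/-- The maximum of `l` and of the averages of `|φ|` over the intervals containing `x` of levels
`0, …, n`. -/
noncomputable def runningMax (N : ℕ) (φ : ℝ → ℝ) (l : ℝ) (n : ℕ) (x : ℝ) : ℝ :=
  max l (partialSups (fun m => levelAvg N φ m x) n)

variable {N m n : ℕ} {p l x : ℝ} {φ g : ℝ → ℝ}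

lemma le_runningMax (N : ℕ) (φ : ℝ → ℝ) (l : ℝ) (n : ℕ) (x : ℝ) : l ≤ runningMax N φ l n x :=
  le_max_left _ _

lemma runningMax_pos (hl : 0 < l) (N : ℕ) (φ : ℝ → ℝ) (n : ℕ) (x : ℝ) :
    0 < runningMax N φ l n x :=
  hl.trans_le (le_runningMax N φ l n x)

lemma levelAvg_le_runningMax (N : ℕ) (φ : ℝ → ℝ) (l : ℝ) (n : ℕ) (x : ℝ) :
    levelAvg N φ n x ≤ runningMax N φ l n x :=
  (le_partialSups (fun m => levelAvg N φ m x) n).trans (le_max_right _ _)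

lemma runningMax_succ (N : ℕ) (φ : ℝ → ℝ) (l : ℝ) (n : ℕ) (x : ℝ) :
    runningMax N φ l (n + 1) x = max (runningMax N φ l n x) (levelAvg N φ (n + 1) x) := by
  rw [runningMax, runningMax, partialSups_add_one, max_assoc]

lemma monotone_runningMax (N : ℕ) (φ : ℝ → ℝ) (l x : ℝ) :
    Monotone fun n => runningMax N φ l n x :=
  fun _ _ h => max_le_max_left _ (partialSups_monotone _ h)

lemma runningMax_zero (hl : ∫ x in Ico (0 : ℝ) 1, |φ x| ≤ l) (hx : x ∈ Ico (0 : ℝ) 1) :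
    runningMax N φ l 0 x = l := by
  rw [runningMax, partialSups_zero, levelAvg_zero N φ hx, max_eq_left hl]

lemma factorsThrough_runningMax (hN : 0 < N) (φ : ℝ → ℝ) (l : ℝ) (n : ℕ) :
    (runningMax N φ l n).FactorsThrough (adicIndex N n) := by
  induction n with
  | zero =>
    intro x y hxy
    rw [runningMax, runningMax, partialSups_zero, partialSups_zero,
      factorsThrough_levelAvg N φ 0 hxy]
  | succ n ih =>
    intro x y hxy
    rw [runningMax_succ, runningMax_succ, factorsThrough_adicIndex_add hN ih 1 hxy,
      factorsThrough_levelAvg N φ (n + 1) hxy]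

lemma measurable_runningMax (hN : 0 < N) (φ : ℝ → ℝ) (l : ℝ) (n : ℕ) :
    Measurable (runningMax N φ l n) :=
  measurable_of_factorsThrough (factorsThrough_runningMax hN φ l n)

lemma integrableOn_rpow_of_factorsThrough (hN : 0 < N) (p : ℝ)
    (hg : g.FactorsThrough (adicIndex N m)) : IntegrableOn (fun x => g x ^ p) (Ico 0 1) :=
  integrableOn_of_factorsThrough hN (hg.comp_left fun y => y ^ p)

lemma integrableOn_bellmanPotential (hN : 0 < N) (B p : ℝ)
    (hg : g.FactorsThrough (adicIndex N m)) (hφ : IntegrableOn φ (Ico 0 1)) :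
    IntegrableOn (fun x => bellmanPotential B p (g x) (φ x)) (Ico 0 1) :=
  (integrableOn_rpow_of_factorsThrough hN p hg).sub
    ((integrableOn_mul_of_factorsThrough hN (hg.comp_left fun y => y ^ (p - 1)) hφ).const_mul B)

lemma setIntegral_bellmanPotential_levelAvg (hN : 0 < N) (B p : ℝ)
    (hg : g.FactorsThrough (adicIndex N m)) (hφ : IntegrableOn φ (Ico 0 1)) :
    ∫ x in Ico (0 : ℝ) 1, bellmanPotential B p (g x) (levelAvg N φ m x) =
      ∫ x in Ico (0 : ℝ) 1, bellmanPotential B p (g x) |φ x| := by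
  have hpow := integrableOn_rpow_of_factorsThrough hN p hg
  have hstep : Function.FactorsThrough (fun x => g x ^ (p - 1)) (adicIndex N m) :=
    hg.comp_left fun y => y ^ (p - 1)
  have havg := integrableOn_of_factorsThrough hN (factorsThrough_levelAvg N φ m)
  simp only [bellmanPotential]
  rw [integral_sub hpow ((integrableOn_mul_of_factorsThrough hN hstep havg).const_mul B),
    integral_sub hpow ((integrableOn_mul_of_factorsThrough hN hstep hφ.abs).const_mul B),
    integral_const_mul, integral_const_mul, setIntegral_mul_levelAvg hN hstep hφ]

/-- The integral over `[0,1)` of `Y^p - B Y^(p-1) |φ|` for `Y = runningMax N φ l n`. -/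
noncomputable def bellmanFunctional (N : ℕ) (B p : ℝ) (φ : ℝ → ℝ) (l : ℝ) (n : ℕ) : ℝ :=
  ∫ x in Ico (0 : ℝ) 1, bellmanPotential B p (runningMax N φ l n x) |φ x|

lemma bellmanFunctional_zero (N : ℕ) (B p : ℝ) (hφ : IntegrableOn φ (Ico 0 1))
    (hl : ∫ x in Ico (0 : ℝ) 1, |φ x| ≤ l) : bellmanFunctional N B p φ l 0 =
      l ^ p - B * (l ^ (p - 1) * ∫ x in Ico (0 : ℝ) 1, |φ x|) := by
  calc bellmanFunctional N B p φ l 0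
      = ∫ x in Ico (0 : ℝ) 1, (l ^ p - B * (l ^ (p - 1) * |φ x|)) :=
        setIntegral_congr_fun measurableSet_Ico fun x hx => by
          simp only [bellmanPotential, runningMax_zero hl hx]
    _ = l ^ p - B * (l ^ (p - 1) * ∫ x in Ico (0 : ℝ) 1, |φ x|) := by
        rw [integral_sub (by simp) ((hφ.abs.const_mul _).const_mul _), integral_const_mul,
          integral_const_mul, setIntegral_const]
        simp

lemma bellmanFunctional_eq_setIntegral_levelAvg (hN : 0 < N) (B p l : ℝ)
    (hφ : IntegrableOn φ (Ico 0 1)) (n j : ℕ) : bellmanFunctional N B p φ l n =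
      ∫ x in Ico (0 : ℝ) 1, bellmanPotential B p (runningMax N φ l n x) (levelAvg N φ (n + j) x) :=
  (setIntegral_bellmanPotential_levelAvg hN B p
    (factorsThrough_adicIndex_add hN (factorsThrough_runningMax hN φ l n) j) hφ).symm

lemma integrableOn_bellmanPotential_levelAvg (hN : 0 < N) (B p l : ℝ) (φ : ℝ → ℝ) (n j : ℕ) :
    IntegrableOn (fun x => bellmanPotential B p (runningMax N φ l n x) (levelAvg N φ (n + j) x))
      (Ico 0 1) :=
  integrableOn_bellmanPotential hN B p (factorsThrough_runningMax hN φ l n)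
    (integrableOn_of_factorsThrough hN (factorsThrough_levelAvg N φ (n + j)))

lemma monotone_bellmanFunctional (hN : 1 < N) (hp : 1 < p) (hφ : IntegrableOn φ (Ico 0 1))
    (hl : 0 < l) : Monotone (bellmanFunctional N (homogConst N p) p φ l) := by
  have hN0 : 0 < N := by lia
  refine monotone_nat_of_le_succ fun n => ?_
  rw [bellmanFunctional_eq_setIntegral_levelAvg hN0 _ p l hφ n 1,
    bellmanFunctional_eq_setIntegral_levelAvg hN0 _ p l hφ (n + 1) 0]
  refine setIntegral_mono_on (integrableOn_bellmanPotential_levelAvg hN0 _ p l φ n 1)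
    (integrableOn_bellmanPotential_levelAvg hN0 _ p l φ (n + 1) 0) measurableSet_Ico
    fun x hx => ?_
  rw [runningMax_succ]
  refine bellmanPotential_le_max (by exact_mod_cast hN) hp (runningMax_pos hl N φ n x) ?_
  calc levelAvg N φ (n + 1) x ≤ N * levelAvg N φ n x := by
        simpa using levelAvg_add_le hN0 hφ n 1 hx.2
    _ ≤ N * runningMax N φ l n x := by gcongr; exact levelAvg_le_runningMax N φ l n x

lemma antitone_bellmanFunctional (hN : 0 < N) (hp : 1 < p) (hφ : IntegrableOn φ (Ico 0 1))
    (hl : 0 < l) : Antitone (bellmanFunctional N (p / (p - 1)) p φ l) := by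
  refine antitone_nat_of_succ_le fun n => ?_
  rw [bellmanFunctional_eq_setIntegral_levelAvg hN _ p l hφ n 1,
    bellmanFunctional_eq_setIntegral_levelAvg hN _ p l hφ (n + 1) 0]
  refine setIntegral_mono_on (integrableOn_bellmanPotential_levelAvg hN _ p l φ (n + 1) 0)
    (integrableOn_bellmanPotential_levelAvg hN _ p l φ n 1) measurableSet_Ico fun x _ => ?_
  rw [runningMax_succ]
  exact bellmanPotential_max_le hp (runningMax_pos hl N φ n x).le

lemma exists_forall_setIntegral_runningMax_rpow_le (hN : 0 < N) (hp : 1 < p)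
    (hφ : IntegrableOn φ (Ico 0 1)) (hφp : IntegrableOn (fun x => |φ x| ^ p) (Ico 0 1))
    (hl : 0 < l) : ∃ K, ∀ n, ∫ x in Ico (0 : ℝ) 1, runningMax N φ l n x ^ p ≤ K := by
  obtain ⟨q, hq⟩ : ∃ q, q = p / (p - 1) := ⟨_, rfl⟩
  have hq0 : 0 ≤ q := hq ▸ div_nonneg (by linarith) (by linarith)
  refine ⟨2 * (bellmanFunctional N q p φ l 0 +
    q * (2 * q) ^ (p - 1) * ∫ x in Ico (0 : ℝ) 1, |φ x| ^ p), fun n => ?_⟩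
  have hY := factorsThrough_runningMax hN φ l n
  have hYp := integrableOn_rpow_of_factorsThrough hN p hY
  have hpot := integrableOn_bellmanPotential hN q p hY hφ.abs
  have hrest : IntegrableOn
      (fun x => runningMax N φ l n x ^ p / 2 + q * (2 * q) ^ (p - 1) * |φ x| ^ p) (Ico 0 1) :=
    (hYp.div_const 2).add (hφp.const_mul _)
  have hanti : bellmanFunctional N q p φ l n ≤ bellmanFunctional N q p φ l 0 :=
    hq ▸ antitone_bellmanFunctional hN hp hφ hl n.zero_le
  have absorb : ∫ x in Ico (0 : ℝ) 1, runningMax N φ l n x ^ p ≤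
      ∫ x in Ico (0 : ℝ) 1, (bellmanPotential q p (runningMax N φ l n x) |φ x| +
        (runningMax N φ l n x ^ p / 2 + q * (2 * q) ^ (p - 1) * |φ x| ^ p)) := by
    refine setIntegral_mono_on hYp (hpot.add hrest) measurableSet_Ico fun x _ => ?_
    have := mul_rpow_sub_one_mul_le_half_add hp hq0 (runningMax_pos hl N φ n x).le
      (abs_nonneg (φ x))
    rw [bellmanPotential]
    linarith
  rw [integral_add hpot hrest, integral_add (hYp.div_const 2) (hφp.const_mul _), integral_div,
    integral_const_mul] at absorb
  rw [bellmanFunctional] at hanti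
  linarith

end RunningMaximum

section MaximalFunctionLowerBound

lemma ae_bddAbove_range_of_monotone_of_integral_le {α : Type*} [MeasurableSpace α]
    {μ : Measure α} {g : ℕ → α → ℝ} {K : ℝ} (hmono : ∀ x, Monotone fun n => g n x)
    (hnonneg : ∀ n x, 0 ≤ g n x) (hmeas : ∀ n, Measurable (g n)) (hint : ∀ n, Integrable (g n) μ)
    (hK : ∀ n, ∫ x, g n x ∂μ ≤ K) : ∀ᵐ x ∂μ, BddAbove (range fun n => g n x) := by
  have hofReal (n : ℕ) : Measurable fun x => ENNReal.ofReal (g n x) := (hmeas n).ennreal_ofReal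
  have hsup : ∫⁻ x, ⨆ n, ENNReal.ofReal (g n x) ∂μ ≤ ENNReal.ofReal K := by
    rw [lintegral_iSup hofReal fun _ _ h x => ENNReal.ofReal_le_ofReal (hmono x h)]
    refine iSup_le fun n => ?_
    rw [← ofReal_integral_eq_lintegral_ofReal (hint n) (ae_of_all _ (hnonneg n))]
    exact ENNReal.ofReal_le_ofReal (hK n)
  filter_upwards [ae_lt_top (Measurable.iSup hofReal) (hsup.trans_lt ENNReal.ofReal_lt_top).ne]
    with x hx
  refine ⟨(⨆ n, ENNReal.ofReal (g n x)).toReal, ?_⟩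
  rintro _ ⟨n, rfl⟩
  exact (ENNReal.ofReal_le_iff_le_toReal hx.ne).1 (le_iSup (fun n => ENNReal.ofReal (g n x)) n)

variable {N : ℕ} {p l x : ℝ} {φ : ℝ → ℝ}

lemma ae_bddAbove_range_levelAvg (hN : 0 < N) (hp : 1 < p) (hφ : IntegrableOn φ (Ico 0 1))
    (hφp : IntegrableOn (fun x => |φ x| ^ p) (Ico 0 1)) :
    ∀ᵐ x ∂volume.restrict (Ico (0 : ℝ) 1), BddAbove (range fun m => levelAvg N φ m x) := by
  obtain ⟨K, hK⟩ := exists_forall_setIntegral_runningMax_rpow_le hN hp hφ hφp one_pos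
  have hY0 (n : ℕ) (x : ℝ) : 0 ≤ runningMax N φ 1 n x := (runningMax_pos one_pos N φ n x).le
  filter_upwards [ae_bddAbove_range_of_monotone_of_integral_le
    (g := fun n x => runningMax N φ 1 n x ^ p)
    (fun x _ _ h => Real.rpow_le_rpow (hY0 _ x) (monotone_runningMax N φ 1 x h) (by linarith))
    (fun n x => Real.rpow_nonneg (hY0 n x) p)
    (fun n => (measurable_runningMax hN φ 1 n).pow_const p)
    (fun n => integrableOn_rpow_of_factorsThrough hN p (factorsThrough_runningMax hN φ 1 n)) hK]
    with x hx
  obtain ⟨C, hC⟩ := hx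
  refine ⟨C, ?_⟩
  rintro _ ⟨n, rfl⟩
  calc levelAvg N φ n x ≤ runningMax N φ 1 n x := levelAvg_le_runningMax N φ 1 n x
    _ ≤ runningMax N φ 1 n x ^ p :=
        Real.self_le_rpow_of_one_le (le_runningMax N φ 1 n x) hp.le
    _ ≤ C := hC ⟨n, rfl⟩

lemma tendsto_runningMax (hN : 0 < N) (l : ℝ) (hx : x ∈ Ico (0 : ℝ) 1)
    (hbdd : BddAbove (range fun m => levelAvg N φ m x)) :
    Tendsto (fun n => runningMax N φ l n x) atTop (nhds (max l (adicMax N φ x))) := by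
  rw [adicMax_eq_iSup hN φ hx, ← ciSup_partialSups_eq hbdd]
  exact tendsto_const_nhds.max (tendsto_atTop_ciSup (partialSups_monotone _)
    (bddAbove_range_partialSups.2 hbdd))

lemma runningMax_le_max_adicMax (hN : 0 < N) (l : ℝ) (hx : x ∈ Ico (0 : ℝ) 1)
    (hbdd : BddAbove (range fun m => levelAvg N φ m x)) (n : ℕ) :
    runningMax N φ l n x ≤ max l (adicMax N φ x) :=
  (monotone_runningMax N φ l x).ge_of_tendsto (tendsto_runningMax hN l hx hbdd) n

lemma integrableOn_max_adicMax_rpow (hN : 0 < N) (hp : 1 < p) (hφ : IntegrableOn φ (Ico 0 1))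
    (hφp : IntegrableOn (fun x => |φ x| ^ p) (Ico 0 1)) (hl : 0 < l) :
    IntegrableOn (fun x => max l (adicMax N φ x) ^ p) (Ico 0 1) := by
  obtain ⟨K, hK⟩ := exists_forall_setIntegral_runningMax_rpow_le hN hp hφ hφp hl
  have hY0 (n : ℕ) (x : ℝ) : 0 ≤ runningMax N φ l n x ^ p :=
    Real.rpow_nonneg (runningMax_pos hl N φ n x).le p
  refine integrable_of_tendsto (G := fun n x => runningMax N φ l n x ^ p) ?_
    (fun n => ((measurable_runningMax hN φ l n).pow_const p).aestronglyMeasurable)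
    (ne_top_of_le_ne_top (ENNReal.ofReal_ne_top (r := K)) ?_)
  · filter_upwards [ae_bddAbove_range_levelAvg hN hp hφ hφp, ae_restrict_mem measurableSet_Ico]
      with x hbdd hx
    exact (tendsto_runningMax hN l hx hbdd).rpow_const (Or.inr (by linarith))
  · refine liminf_le_of_frequently_le' (Frequently.of_forall fun n => ?_)
    simp only [Real.enorm_of_nonneg (hY0 n _)]
    rw [← ofReal_integral_eq_lintegral_ofReal (integrableOn_rpow_of_factorsThrough hN p
      (factorsThrough_runningMax hN φ l n)) (ae_of_all _ (hY0 n))]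
    exact ENNReal.ofReal_le_ofReal (hK n)

lemma ae_abs_le_adicMax (hN : 1 < N) (hp : 1 < p) (hφ : IntegrableOn φ (Ico 0 1))
    (hφp : IntegrableOn (fun x => |φ x| ^ p) (Ico 0 1)) :
    ∀ᵐ x ∂volume.restrict (Ico (0 : ℝ) 1), |φ x| ≤ adicMax N φ x := by
  have hN0 : 0 < N := by lia
  filter_upwards [ae_tendsto_levelAvg hN hφ, ae_bddAbove_range_levelAvg hN0 hp hφ hφp,
    ae_restrict_mem measurableSet_Ico] with x hlim hbdd hx
  rw [adicMax_eq_iSup hN0 φ hx]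
  exact le_of_tendsto' hlim (le_ciSup hbdd)

lemma abs_bellmanPotential_le {B x y z : ℝ} (hB : 0 ≤ B) (hp : 1 < p) (hx : 0 ≤ x) (hy : 0 ≤ y)
    (hyz : y ≤ z) (hxz : x ≤ z) : |bellmanPotential B p y x| ≤ (1 + B) * z ^ p := by
  have hz : 0 ≤ z := hx.trans hxz
  have hpow : y ^ p ≤ z ^ p := Real.rpow_le_rpow hy hyz (by linarith)
  have hmix : B * (y ^ (p - 1) * x) ≤ B * z ^ p := by
    rw [rpow_eq_rpow_sub_one_mul hp hz]
    have := Real.rpow_le_rpow hy hyz (by linarith : 0 ≤ p - 1)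
    gcongr
  have : 0 ≤ B * (y ^ (p - 1) * x) := by positivity
  have : 0 ≤ y ^ p := by positivity
  rw [bellmanPotential, abs_le]
  constructor <;> nlinarith

lemma measurable_iSup_levelAvg (N : ℕ) (φ : ℝ → ℝ) :
    Measurable fun x => ⨆ m, levelAvg N φ m x :=
  Measurable.iSup (measurable_levelAvg N φ)

lemma aemeasurable_adicMax (hN : 0 < N) (φ : ℝ → ℝ) :
    AEMeasurable (adicMax N φ) (volume.restrict (Ico 0 1)) :=
  ⟨_, measurable_iSup_levelAvg N φ, (ae_restrict_mem measurableSet_Ico).mono fun _ hx =>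
    adicMax_eq_iSup hN φ hx⟩

lemma integrableOn_bellmanPotential_adicMax {B : ℝ} (hB : 0 ≤ B) (hN : 1 < N) (hp : 1 < p)
    (hφ : IntegrableOn φ (Ico 0 1)) (hφp : IntegrableOn (fun x => |φ x| ^ p) (Ico 0 1))
    (hl : 0 < l) :
    IntegrableOn (fun x => bellmanPotential B p (max l (adicMax N φ x)) |φ x|) (Ico 0 1) := by
  have hN0 : 0 < N := by lia
  have hZ : AEMeasurable (fun x => max l (adicMax N φ x)) (volume.restrict (Ico 0 1)) :=
    aemeasurable_const.max (aemeasurable_adicMax hN0 φ)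
  refine ((integrableOn_max_adicMax_rpow hN0 hp hφ hφp hl).const_mul (1 + B)).mono'
    ((hZ.pow_const p).sub (((hZ.pow_const (p - 1)).mul
      hφ.abs.aestronglyMeasurable.aemeasurable).const_mul B)).aestronglyMeasurable ?_
  filter_upwards [ae_abs_le_adicMax hN hp hφ hφp] with x hφx
  exact abs_bellmanPotential_le hB hp (abs_nonneg _) (hl.le.trans (le_max_left _ _)) le_rfl
    (hφx.trans (le_max_right _ _))

lemma tendsto_bellmanFunctional {B : ℝ} (hB : 0 ≤ B) (hN : 1 < N) (hp : 1 < p)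
    (hφ : IntegrableOn φ (Ico 0 1)) (hφp : IntegrableOn (fun x => |φ x| ^ p) (Ico 0 1))
    (hl : 0 < l) : Tendsto (bellmanFunctional N B p φ l) atTop
      (nhds (∫ x in Ico (0 : ℝ) 1, bellmanPotential B p (max l (adicMax N φ x)) |φ x|)) := by
  have hN0 : 0 < N := by lia
  refine tendsto_integral_of_dominated_convergence
    (fun x => (1 + B) * max l (adicMax N φ x) ^ p) (fun n =>
      (integrableOn_bellmanPotential hN0 B p (factorsThrough_runningMax hN0 φ l n)
        hφ.abs).aestronglyMeasurable)
    ((integrableOn_max_adicMax_rpow hN0 hp hφ hφp hl).const_mul _) (fun n => ?_) ?_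
  · filter_upwards [ae_abs_le_adicMax hN hp hφ hφp, ae_bddAbove_range_levelAvg hN0 hp hφ hφp,
      ae_restrict_mem measurableSet_Ico] with x hφx hbdd hx
    exact abs_bellmanPotential_le hB hp (abs_nonneg _) (runningMax_pos hl N φ n x).le
      (runningMax_le_max_adicMax hN0 l hx hbdd n) (hφx.trans (le_max_right _ _))
  · filter_upwards [ae_bddAbove_range_levelAvg hN0 hp hφ hφp, ae_restrict_mem measurableSet_Ico]
      with x hbdd hx
    have hlim := tendsto_runningMax hN0 l hx hbdd
    exact (hlim.rpow_const (Or.inr (by linarith))).sub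
      (((hlim.rpow_const (Or.inr (by linarith))).mul_const _).const_mul B)

theorem homogConst_mul_add_le_setIntegral_max_adicMax_rpow (hN : 1 < N) (hp : 1 < p)
    (hφ : IntegrableOn φ (Ico 0 1)) (hφp : IntegrableOn (fun x => |φ x| ^ p) (Ico 0 1))
    (hl : 0 < l) (hmean : ∫ x in Ico (0 : ℝ) 1, |φ x| ≤ l) :
    homogConst N p * (∫ x in Ico (0 : ℝ) 1, |φ x| ^ p) +
        (l ^ p - homogConst N p * (l ^ (p - 1) * ∫ x in Ico (0 : ℝ) 1, |φ x|)) ≤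
      ∫ x in Ico (0 : ℝ) 1, max l (adicMax N φ x) ^ p := by
  have hA := (homogConst_pos (by exact_mod_cast hN : (1 : ℝ) < N) hp).le
  have hZp := integrableOn_max_adicMax_rpow (by lia) hp hφ hφp hl (N := N)
  have hlimit : ∫ x in Ico (0 : ℝ) 1, bellmanPotential (homogConst N p) p
      (max l (adicMax N φ x)) |φ x| ≤
      ∫ x in Ico (0 : ℝ) 1, (max l (adicMax N φ x) ^ p - homogConst N p * |φ x| ^ p) := by
    refine integral_mono_ae (integrableOn_bellmanPotential_adicMax hA hN hp hφ hφp hl)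
      (hZp.sub (hφp.const_mul _)) ?_
    filter_upwards [ae_abs_le_adicMax hN hp hφ hφp] with x hφx
    rw [bellmanPotential, rpow_eq_rpow_sub_one_mul hp (abs_nonneg (φ x))]
    gcongr
    exact hφx.trans (le_max_right _ _)
  rw [integral_sub hZp (hφp.const_mul _), integral_const_mul] at hlimit
  have hstart := (monotone_bellmanFunctional hN hp hφ hl).ge_of_tendsto
    (tendsto_bellmanFunctional hA hN hp hφ hφp hl) 0
  rw [bellmanFunctional_zero N _ p hφ hmean] at hstart
  linarith

end MaximalFunctionLowerBound

section UpperLevelSets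

lemma exists_measure_Ioi_le_le_measure_Ici {ν : Measure ℝ} [IsFiniteMeasure ν] {b : ℝ}
    {κ : ENNReal} (hb : ν (Iio b) = 0) (hκ0 : 0 < κ) (hκ1 : κ ≤ ν univ) :
    ∃ t, b ≤ t ∧ ν (Ioi t) ≤ κ ∧ κ ≤ ν (Ici t) := by
  set T := {t | b ≤ t ∧ ν (Ioi t) ≤ κ}
  have hne : T.Nonempty := by
    have hlim : Tendsto (fun s : ℝ => ν (Ioi s)) atTop (nhds 0) := by
      have hinter : ⋂ s : ℝ, Ioi s = ∅ :=
        eq_empty_of_forall_notMem fun x hx => lt_irrefl x (mem_iInter.1 hx x)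
      rw [← measure_empty (μ := ν), ← hinter]
      exact tendsto_measure_iInter_atTop (fun _ => measurableSet_Ioi.nullMeasurableSet)
        antitone_Ioi ⟨0, measure_ne_top _ _⟩
    obtain ⟨s, hs, hbs⟩ := ((hlim.eventually_le_const hκ0).and (eventually_ge_atTop b)).exists
    exact ⟨s, hbs, hs⟩
  have hbdd : BddBelow T := ⟨b, fun _ h => h.1⟩
  refine ⟨sInf T, le_csInf hne fun _ h => h.1, ?_, ?_⟩
  · obtain ⟨u, hu_anti, hu_lim, hu_mem⟩ := exists_seq_tendsto_sInf hne hbdd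
    rw [← (isGLB_of_tendsto_atTop hu_anti hu_lim).iUnion_Ioi_eq,
      Monotone.measure_iUnion fun _ _ h => Ioi_subset_Ioi (hu_anti h)]
    exact iSup_le fun n => (hu_mem n).2
  · rcases (le_csInf hne fun _ h => h.1 : b ≤ sInf T).eq_or_lt with h | h
    · rwa [← h, ← compl_Iio, measure_compl measurableSet_Iio (measure_ne_top _ _), hb, tsub_zero]
    obtain ⟨v, hv_mono, hv_mem, hv_lim⟩ := exists_seq_strictMono_tendsto' h
    have hinter : Ici (sInf T) = ⋂ n, Ioi (v n) := by
      ext x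
      simp only [mem_Ici, mem_iInter, mem_Ioi]
      exact ⟨fun hx n => (hv_mem n).2.trans_le hx,
        fun hx => le_of_tendsto' hv_lim fun n => (hx n).le⟩
    rw [hinter, Antitone.measure_iInter (fun _ _ h => Ioi_subset_Ioi (hv_mono.monotone h))
      (fun _ => measurableSet_Ioi.nullMeasurableSet) ⟨0, measure_ne_top _ _⟩]
    refine le_iInf fun n => le_of_not_ge fun hle => ?_
    exact notMem_of_lt_csInf (hv_mem n).2 hbdd ⟨(hv_mem n).1.le, hle⟩

lemma exists_measurableSet_volume_real_eq {S T : Set ℝ} {a b κ : ℝ} (hS : MeasurableSet S)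
    (hT : MeasurableSet T) (hST : S ⊆ T) (hTab : T ⊆ Ico a b) (hκS : volume.real S ≤ κ)
    (hκT : κ ≤ volume.real T) :
    ∃ E, MeasurableSet E ∧ S ⊆ E ∧ E ⊆ T ∧ volume.real E = κ := by
  have hfin (s : ℝ) : volume (S ∪ (T ∩ Iio s)) ≠ ⊤ :=
    measure_ne_top_of_subset ((union_subset hST inter_subset_left).trans hTab)
      measure_Ico_lt_top.ne
  have hlip : LipschitzWith 1 fun s => volume.real (S ∪ (T ∩ Iio s)) := by
    refine LipschitzWith.of_le_add fun s r => ?_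
    have hsub : S ∪ (T ∩ Iio s) ⊆ (S ∪ (T ∩ Iio r)) ∪ Ico r s := by
      rintro x (hx | ⟨hx, hxs⟩)
      · exact Or.inl (Or.inl hx)
      · rcases lt_or_ge x r with h | h
        · exact Or.inl (Or.inr ⟨hx, h⟩)
        · exact Or.inr ⟨h, hxs⟩
    calc volume.real (S ∪ (T ∩ Iio s))
        ≤ volume.real ((S ∪ (T ∩ Iio r)) ∪ Ico r s) :=
          measureReal_mono hsub (measure_union_ne_top (hfin r) measure_Ico_lt_top.ne)
      _ ≤ volume.real (S ∪ (T ∩ Iio r)) + volume.real (Ico r s) := measureReal_union_le _ _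
      _ ≤ volume.real (S ∪ (T ∩ Iio r)) + dist s r := by
          rw [Real.volume_real_Ico, Real.dist_eq]
          gcongr
          exact max_le (le_abs_self _) (abs_nonneg _)
  have hleft : S ∪ (T ∩ Iio a) = S := union_eq_self_of_subset_right fun x hx =>
    absurd (hTab hx.1).1 (not_le.2 hx.2)
  have hright : S ∪ (T ∩ Iio b) = T := by
    rw [inter_eq_self_of_subset_left (t := Iio b) fun x hx => (hTab hx).2,
      union_eq_self_of_subset_left hST]
  obtain ⟨s, hs⟩ := mem_range_of_exists_le_of_exists_ge hlip.continuous
    ⟨a, by simpa only [hleft] using hκS⟩ ⟨b, by simpa only [hright] using hκT⟩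
  exact ⟨_, hS.union (hT.inter measurableSet_Iio), subset_union_left,
    union_subset hST inter_subset_left, hs⟩

lemma exists_upper_level_set {W : ℝ → ℝ} {a b m κ : ℝ} (hW : Measurable W)
    (hm : ∀ᵐ x ∂volume.restrict (Ico a b), m ≤ W x) (hκ0 : 0 < κ)
    (hκ1 : κ ≤ volume.real (Ico a b)) :
    ∃ t E, m ≤ t ∧ MeasurableSet E ∧ E ⊆ Ico a b ∧ volume.real E = κ ∧
      (∀ x ∈ E, t ≤ W x) ∧ ∀ x ∈ Ico a b \ E, W x ≤ t := by
  have hmap {s : Set ℝ} (hs : MeasurableSet s) :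
      (volume.restrict (Ico a b)).map W s = volume (W ⁻¹' s ∩ Ico a b) := by
    rw [Measure.map_apply hW hs, Measure.restrict_apply (hW hs)]
  obtain ⟨t, hmt, hlt, hle⟩ := exists_measure_Ioi_le_le_measure_Ici
    (ν := (volume.restrict (Ico a b)).map W) (b := m) (κ := ENNReal.ofReal κ)
    (by rw [Measure.map_apply hW measurableSet_Iio]
        simpa only [ae_iff, not_le, preimage, mem_Iio] using hm)
    (ENNReal.ofReal_pos.2 hκ0)
    (by rw [hmap MeasurableSet.univ, preimage_univ, univ_inter]
        exact (ENNReal.ofReal_le_iff_le_toReal measure_Ico_lt_top.ne).2 hκ1)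
  rw [hmap measurableSet_Ioi] at hlt
  rw [hmap measurableSet_Ici] at hle
  obtain ⟨E, hE, hsub, hsup, hEκ⟩ := exists_measurableSet_volume_real_eq
    ((hW measurableSet_Ioi).inter measurableSet_Ico)
    ((hW measurableSet_Ici).inter measurableSet_Ico)
    (inter_subset_inter_left _ (preimage_mono Ioi_subset_Ici_self)) inter_subset_right
    (ENNReal.toReal_le_of_le_ofReal hκ0.le hlt)
    ((ENNReal.ofReal_le_iff_le_toReal
      (measure_ne_top_of_subset inter_subset_right measure_Ico_lt_top.ne)).1 hle)
  exact ⟨t, E, hmt, hE, hsup.trans inter_subset_right, hEκ, fun x hx => (hsup hx).1,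
    fun x hx => not_lt.1 fun h => hx.2 (hsub ⟨h, hx.1⟩)⟩

end UpperLevelSets

section SupMeasLowerBound

variable {N : ℕ} {p κ A c f t x : ℝ} {φ : ℝ → ℝ}

lemma adicMax_nonneg (N : ℕ) (φ : ℝ → ℝ) (x : ℝ) : 0 ≤ adicMax N φ x :=
  Real.sSup_nonneg fun _ ⟨_, _, _, _, hr⟩ =>
    hr ▸ mul_nonneg (by positivity) (integral_nonneg fun _ => abs_nonneg _)

lemma ae_integral_abs_le_iSup_levelAvg (hN : 0 < N) (hp : 1 < p) (hφ : IntegrableOn φ (Ico 0 1))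
    (hφp : IntegrableOn (fun x => |φ x| ^ p) (Ico 0 1)) :
    ∀ᵐ x ∂volume.restrict (Ico (0 : ℝ) 1),
      ∫ y in Ico (0 : ℝ) 1, |φ y| ≤ ⨆ m, levelAvg N φ m x := by
  filter_upwards [ae_bddAbove_range_levelAvg hN hp hφ hφp, ae_restrict_mem measurableSet_Ico]
    with x hbdd hx
  rw [← levelAvg_zero N φ hx]
  exact le_ciSup hbdd 0

lemma integrableOn_adicMax_rpow (hN : 0 < N) (hp : 1 < p) (hφ : IntegrableOn φ (Ico 0 1))
    (hφp : IntegrableOn (fun x => |φ x| ^ p) (Ico 0 1)) :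
    IntegrableOn (fun x => adicMax N φ x ^ p) (Ico 0 1) := by
  refine (integrableOn_max_adicMax_rpow hN hp hφ hφp one_pos).mono'
    ((aemeasurable_adicMax hN φ).pow_const p).aestronglyMeasurable (ae_of_all _ fun x => ?_)
  rw [Real.norm_of_nonneg (Real.rpow_nonneg (adicMax_nonneg N φ x) p)]
  exact Real.rpow_le_rpow (adicMax_nonneg N φ x) (le_max_right _ _) (by linarith)

lemma setIntegral_adicMax_rpow_le_supMeas {E : Set ℝ}
    (hM : IntegrableOn (fun x => adicMax N φ x ^ p) (Ico 0 1)) (hE : MeasurableSet E)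
    (hE01 : E ⊆ Ico 0 1) : ∫ x in E, adicMax N φ x ^ p ≤ supMeas N p (volume.real E) φ := by
  refine le_csSup ⟨∫ x in Ico (0 : ℝ) 1, adicMax N φ x ^ p, ?_⟩ ⟨E, hE, hE01,
    (ofReal_measureReal (measure_ne_top_of_subset hE01 measure_Ico_lt_top.ne)).symm, rfl⟩
  rintro _ ⟨E', -, hE', -, rfl⟩
  exact setIntegral_mono_set hM
    (ae_of_all _ fun x => Real.rpow_nonneg (adicMax_nonneg N φ x) p) hE'.eventuallyLE

lemma setIntegral_max_rpow_eq {α : Type*} [MeasurableSpace α] {μ : Measure α} {M : α → ℝ}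
    {E S : Set α} (hE : MeasurableSet E) (hS : MeasurableSet S) (hES : E ⊆ S) (hfin : μ S ≠ ⊤)
    (hM : IntegrableOn (fun x => max t (M x) ^ p) S μ) (hge : ∀ x ∈ E, t ≤ M x)
    (hle : ∀ x ∈ S \ E, M x ≤ t) :
    ∫ x in S, max t (M x) ^ p ∂μ =
      (∫ x in E, M x ^ p ∂μ) + (μ.real S - μ.real E) * t ^ p := by
  have hin : ∫ x in E, max t (M x) ^ p ∂μ = ∫ x in E, M x ^ p ∂μ :=
    setIntegral_congr_fun hE fun x hx => by simp only [max_eq_right (hge x hx)]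
  have hout : ∫ x in S \ E, max t (M x) ^ p ∂μ = (μ.real S - μ.real E) * t ^ p := by
    rw [setIntegral_congr_fun (g := fun _ => t ^ p) (hS.diff hE) fun x hx => by
      simp only [max_eq_left (hle x hx)], setIntegral_const, measureReal_sdiff hES hE hfin,
      smul_eq_mul]
  rw [← hin, ← hout, ← setIntegral_union disjoint_sdiff_self_right (hS.diff hE)
    (hM.mono_set hES) (hM.mono_set sdiff_subset), union_sdiff_cancel hES]

theorem exists_le_supMeas (hN : 1 < N) (hp : 1 < p) (hφ : IntegrableOn φ (Ico 0 1))
    (hφp : IntegrableOn (fun x => |φ x| ^ p) (Ico 0 1)) (hmean : 0 < ∫ x in Ico (0 : ℝ) 1, |φ x|)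
    (hκ0 : 0 < κ) (hκ1 : κ ≤ 1) :
    ∃ t, 0 < t ∧ homogConst N p * (∫ x in Ico (0 : ℝ) 1, |φ x| ^ p) + κ * t ^ p -
      homogConst N p * (t ^ (p - 1) * ∫ x in Ico (0 : ℝ) 1, |φ x|) ≤ supMeas N p κ φ := by
  have hN0 : 0 < N := by lia
  obtain ⟨t, E, hmt, hE, hE01, rfl, hge, hle⟩ := exists_upper_level_set
    (measurable_iSup_levelAvg N φ) (ae_integral_abs_le_iSup_levelAvg hN0 hp hφ hφp) hκ0
    (by simpa using hκ1)
  have ht : 0 < t := hmean.trans_le hmt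
  have hsplit := setIntegral_max_rpow_eq hE measurableSet_Ico hE01
    measure_Ico_lt_top.ne
    (integrableOn_max_adicMax_rpow hN0 hp hφ hφp ht)
    (fun x hx => by rw [adicMax_eq_iSup hN0 φ (hE01 hx)]; exact hge x hx)
    (fun x hx => by rw [adicMax_eq_iSup hN0 φ hx.1]; exact hle x hx)
  rw [Real.volume_real_Ico_of_le zero_le_one, sub_zero] at hsplit
  have htotal := homogConst_mul_add_le_setIntegral_max_adicMax_rpow hN hp hφ hφp ht hmt
  have hsup := setIntegral_adicMax_rpow_le_supMeas
    (integrableOn_adicMax_rpow hN0 hp hφ hφp) hE hE01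
  exact ⟨t, ht, by linarith⟩

lemma mul_sub_div_eq_of_eq_div (hp : 1 < p) (hf : 0 < f) (hκ : 0 < κ) (hA : 0 < A)
    (hc : c = (p - 1) / p * A) (F : ℝ) :
    A * (F - c ^ (p - 1) * f ^ p / (p * κ ^ (p - 1))) =
      A * F + κ * (c * f / κ) ^ p - A * ((c * f / κ) ^ (p - 1) * f) := by
  have hp1 : 0 < p - 1 := by linarith
  have hc0 : 0 < c := by rw [hc]; positivity
  obtain rfl : A = p / (p - 1) * c := by rw [hc]; field_simp
  rw [rpow_eq_rpow_sub_one_mul hp (by positivity : 0 ≤ c * f / κ),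
    rpow_eq_rpow_sub_one_mul hp hf.le, Real.div_rpow (by positivity) hκ.le,
    Real.mul_rpow hc0.le hf.le]
  field_simp
  ring

-- Young's inequality for `c f / κ` and `t ^ (p - 1)`, i.e. minimization over `t`.
lemma mul_rpow_sub_mul_le (hp : 1 < p) (hf : 0 < f) (hκ : 0 < κ) (hA : 0 < A)
    (hc : c = (p - 1) / p * A) (ht : 0 ≤ t) :
    κ * (c * f / κ) ^ p - A * ((c * f / κ) ^ (p - 1) * f) ≤
      κ * t ^ p - A * (t ^ (p - 1) * f) := by
  have hp1 : 0 < p - 1 := by linarith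
  have hc0 : 0 < c := by rw [hc]; positivity
  set s := c * f / κ with hs
  have hs0 : 0 < s := by positivity
  have young := Real.young_inequality_of_nonneg hs0.le (Real.rpow_nonneg ht (p - 1))
    (Real.HolderConjugate.conjExponent hp)
  rw [← Real.rpow_mul ht, Real.conjExponent, mul_div_cancel₀ _ hp1.ne'] at young
  have hAf : A * f = p / (p - 1) * κ * s := by rw [hs, hc]; field_simp
  calc κ * s ^ p - A * (s ^ (p - 1) * f)
      = κ * t ^ p - p / (p - 1) * κ * (s ^ p / p + t ^ p / (p / (p - 1))) := by
        rw [mul_left_comm, hAf, rpow_eq_rpow_sub_one_mul hp hs0.le]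
        field_simp
        ring
    _ ≤ κ * t ^ p - p / (p - 1) * κ * (s * t ^ (p - 1)) := by gcongr
    _ = κ * t ^ p - A * (t ^ (p - 1) * f) := by rw [mul_left_comm A, hAf]; ring

theorem homogConst_mul_sub_le_supMeas {F : ℝ} (hN : 1 < N) (hp : 1 < p)
    (hc : c = (p - 1) / p * homogConst N p) (hκ0 : 0 < κ) (hκ1 : κ ≤ 1) (hf : 0 < f) (hF : 0 < F)
    (hφ0 : ∀ x ∈ Ico (0 : ℝ) 1, 0 ≤ φ x) (hmean : ∫ x in Ico (0 : ℝ) 1, φ x = f)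
    (hmoment : ∫ x in Ico (0 : ℝ) 1, φ x ^ p = F) :
    homogConst N p * (F - c ^ (p - 1) * f ^ p / (p * κ ^ (p - 1))) ≤ supMeas N p κ φ := by
  have hA := homogConst_pos (by exact_mod_cast hN : (1 : ℝ) < N) hp
  have habs {x : ℝ} (hx : x ∈ Ico (0 : ℝ) 1) : φ x = |φ x| := (abs_of_nonneg (hφ0 x hx)).symm
  have hφ : IntegrableOn φ (Ico 0 1) :=
    of_not_not fun h => hf.ne (by rw [← hmean, integral_undef h])
  rw [setIntegral_congr_fun measurableSet_Ico fun x hx => habs hx] at hmean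
  rw [setIntegral_congr_fun (g := fun x => |φ x| ^ p) measurableSet_Ico
    fun x hx => congrArg (· ^ p) (habs hx)] at hmoment
  have hφp : IntegrableOn (fun x => |φ x| ^ p) (Ico 0 1) :=
    of_not_not fun h => hF.ne (by rw [← hmoment, integral_undef h])
  obtain ⟨t, ht, hle⟩ := exists_le_supMeas hN hp hφ hφp (hmean ▸ hf) hκ0 hκ1
  rw [hmean, hmoment] at hle
  have hmin := mul_rpow_sub_mul_le hp hf hκ0 hA hc ht.le
  rw [mul_sub_div_eq_of_eq_div hp hf hκ0 hA hc]
  linarith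

end SupMeasLowerBound

section SpikeSets

/-- The union, over all level-`m` intervals `I`, of the image of `[0, y) ∩ I` under the contraction
of ratio `N⁻ʲ` fixing the left endpoint of `I`. For `j = 0` this is `[0, y)`; a function
concentrated on the spikes `spikeSet N m k y` has large averages on the larger sets
`spikeSet N m j y`, `j ≤ k`. -/
def spikeSet (N m j : ℕ) (y : ℝ) : Set ℝ :=
  {x | 0 ≤ x ∧ (x - adicIndex N m x / (N : ℝ) ^ m) * (N : ℝ) ^ j <
    min y ((adicIndex N m x + 1) / (N : ℝ) ^ m) - adicIndex N m x / (N : ℝ) ^ m}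

variable {N m j k : ℕ} {x w y : ℝ}

lemma measurableSet_spikeSet (N m j : ℕ) (y : ℝ) : MeasurableSet (spikeSet N m j y) := by
  have hidx : Measurable fun x => (adicIndex N m x : ℝ) :=
    measurable_from_top.comp (measurable_adicIndex N m)
  exact measurableSet_Ici.inter (measurableSet_lt
    ((measurable_id.sub (hidx.div_const _)).mul_const _)
    ((measurable_const.min ((hidx.add_const 1).div_const _)).sub (hidx.div_const _)))

lemma antitone_spikeSet (hN : 0 < N) (m : ℕ) (y : ℝ) : Antitone fun j => spikeSet N m j y := by
  rintro i j hij x ⟨hx, hlt⟩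
  have hge := (mem_adicItv_adicIndex (m := m) hN hx).1
  have hN1 : (1 : ℝ) ≤ N := by exact_mod_cast hN
  exact ⟨hx, lt_of_le_of_lt (mul_le_mul_of_nonneg_left (pow_le_pow_right₀ hN1 hij)
    (sub_nonneg.2 hge)) hlt⟩

lemma spikeSet_subset_Ico (hN : 0 < N) (m j : ℕ) (y : ℝ) : spikeSet N m j y ⊆ Ico 0 y :=
  fun x hx => by
    obtain ⟨hx0, hlt⟩ := antitone_spikeSet hN m y (Nat.zero_le j) hx
    rw [pow_zero, mul_one, sub_lt_sub_iff_right] at hlt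
    exact ⟨hx0, hlt.trans_le (min_le_left _ _)⟩

lemma spikeSet_inter_adicItv (hN : 0 < N) (m j i : ℕ) (y : ℝ) :
    spikeSet N m j y ∩ adicItv N m i = Ico (i / (N : ℝ) ^ m) (i / (N : ℝ) ^ m +
      (min y ((i + 1) / (N : ℝ) ^ m) - i / (N : ℝ) ^ m) / (N : ℝ) ^ j) := by
  have hNj : (0 : ℝ) < (N : ℝ) ^ j := by positivity
  ext x
  constructor
  · rintro ⟨⟨-, hlt⟩, hxi⟩
    rw [adicIndex_eq_of_mem hN hxi, ← lt_div_iff₀ hNj] at hlt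
    exact ⟨hxi.1, by linarith⟩
  · rintro ⟨hge, hlt⟩
    have hlt' : (x - i / (N : ℝ) ^ m) * (N : ℝ) ^ j <
        min y ((i + 1) / (N : ℝ) ^ m) - i / (N : ℝ) ^ m := by
      rw [← lt_div_iff₀ hNj]
      linarith
    have hNj1 : (1 : ℝ) ≤ (N : ℝ) ^ j := one_le_pow₀ (by exact_mod_cast hN)
    have hxi : x ∈ adicItv N m i := by
      refine ⟨hge, ?_⟩
      have := le_mul_of_one_le_right (sub_nonneg.2 hge) hNj1
      linarith [min_le_right y ((i + 1) / (N : ℝ) ^ m)]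
    refine ⟨⟨nonneg_of_mem_adicItv hxi, ?_⟩, hxi⟩
    rwa [adicIndex_eq_of_mem hN hxi]

lemma volume_real_spikeSet_inter_adicItv (hN : 0 < N) (m j i : ℕ) (y : ℝ) :
    volume.real (spikeSet N m j y ∩ adicItv N m i) =
      volume.real (Ico 0 y ∩ adicItv N m i) / (N : ℝ) ^ j := by
  rw [spikeSet_inter_adicItv hN, adicItv, Ico_inter_Ico, Real.volume_real_Ico,
    Real.volume_real_Ico, sup_of_le_right (by positivity : (0 : ℝ) ≤ i / (N : ℝ) ^ m),
    add_sub_cancel_left, ← max_div_div_right (by positivity), zero_div]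

lemma volume_real_inter_Ico_eq_sum (hN : 0 < N) (m : ℕ) {S : Set ℝ} (hS : MeasurableSet S) :
    volume.real (S ∩ Ico 0 1) = ∑ i ∈ Finset.range (N ^ m), volume.real (S ∩ adicItv N m i) := by
  rw [Ico_eq_biUnion_adicItv hN m, inter_iUnion₂]
  exact measureReal_biUnion_finset
    ((pairwiseDisjoint_adicItv hN m _).mono fun _ => inter_subset_right)
    (fun i _ => hS.inter (measurableSet_adicItv N m i))
    fun i _ => measure_ne_top_of_subset inter_subset_right measure_Ico_lt_top.ne

lemma volume_real_spikeSet (hN : 0 < N) (m j : ℕ) (hy0 : 0 ≤ y) (hy1 : y ≤ 1) :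
    volume.real (spikeSet N m j y) = y / (N : ℝ) ^ j := by
  have hsub : Ico 0 y ⊆ Ico 0 1 := Ico_subset_Ico_right hy1
  rw [← inter_eq_self_of_subset_left ((spikeSet_subset_Ico hN m j y).trans hsub),
    volume_real_inter_Ico_eq_sum hN m (measurableSet_spikeSet N m j y)]
  simp only [volume_real_spikeSet_inter_adicItv hN]
  rw [← Finset.sum_div, ← volume_real_inter_Ico_eq_sum hN m measurableSet_Ico,
    inter_eq_self_of_subset_left hsub, Real.volume_real_Ico_of_le hy0, sub_zero]

lemma mem_spikeSet_iff_of_adicIndex_ne (hN : 0 < N) (hx : 0 ≤ x) (hy : 0 ≤ y)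
    (hne : adicIndex N m x ≠ adicIndex N m y) :
    x ∈ spikeSet N m j y ↔
      adicIndex N m x < adicIndex N m y ∧ adicIndex N (m + j) x = adicIndex N m x * N ^ j := by
  have hNm : (0 : ℝ) < (N : ℝ) ^ m := by positivity
  have hNj : (0 : ℝ) < (N : ℝ) ^ j := by positivity
  have hxmem := mem_adicItv_adicIndex (m := m) hN hx
  have hymem := mem_adicItv_adicIndex (m := m) hN hy
  rcases hne.lt_or_gt with h | h
  · have hle : (adicIndex N m x + 1) / (N : ℝ) ^ m ≤ y :=
      le_trans (by gcongr; exact_mod_cast h) hymem.1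
    rw [spikeSet, mem_ofPred_eq, min_eq_right hle, and_iff_right hx, and_iff_right h,
      ← sub_div, add_sub_cancel_left, ← mem_adicItv_iff (m := m + j) hN hx, adicItv, mem_Ico,
      div_le_iff₀ (by positivity), lt_div_iff₀ hNm, lt_div_iff₀ (by positivity)]
    have hge := mul_le_mul_of_nonneg_right ((div_le_iff₀ hNm).1 hxmem.1) hNj.le
    have hscale : (x - adicIndex N m x / (N : ℝ) ^ m) * (N : ℝ) ^ j * (N : ℝ) ^ m =
        x * (N : ℝ) ^ m * (N : ℝ) ^ j - adicIndex N m x * (N : ℝ) ^ j := by field_simp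
    push_cast
    rw [hscale, pow_add, ← mul_assoc, and_iff_right hge, sub_lt_iff_lt_add']
  · refine iff_of_false (fun hmem => ?_) fun hlt => hlt.1.not_gt h
    have hxy := (spikeSet_subset_Ico hN m j y hmem).2
    have hle : (adicIndex N m y + 1) / (N : ℝ) ^ m ≤ adicIndex N m x / (N : ℝ) ^ m := by
      gcongr
      exact_mod_cast h
    linarith [hxmem.1, hymem.2]

lemma mem_spikeSet_iff_of_adicIndex_eq (hN : 0 < N) (hx : 0 ≤ x) (hw : 0 ≤ w) (hy : 0 ≤ y)
    (hne : adicIndex N m x ≠ adicIndex N m y)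
    (hwx : adicIndex N (m + j) w = adicIndex N (m + j) x) :
    w ∈ spikeSet N m j y ↔ x ∈ spikeSet N m j y := by
  have hwx' : adicIndex N m w = adicIndex N m x := by
    rw [← adicIndex_div hN m j w, hwx, adicIndex_div hN]
  rw [mem_spikeSet_iff_of_adicIndex_ne hN hx hy hne,
    mem_spikeSet_iff_of_adicIndex_ne hN hw hy (hwx' ▸ hne), hwx, hwx']

end SpikeSets

section NearExtremalFunction

/-- The near-extremal function for the upper bound: the level `l` on `[y, α)`, with the mass `l y`
it would carry on `[0, y)` concentrated at height `l N^k` on the spikes of generation `k`. -/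
noncomputable def nearExtremal (N m k : ℕ) (y α l x : ℝ) : ℝ :=
  (spikeSet N m k y).indicator (fun _ => l * (N : ℝ) ^ k) x + (Ico y α).indicator (fun _ => l) x

variable {N m j k : ℕ} {p x w y α l : ℝ}

lemma integrableOn_indicator_const {ι : Type*} [MeasurableSpace ι] {μ : Measure ι} {S I : Set ι}
    (hS : MeasurableSet S) (hI : μ I ≠ ⊤) (b : ℝ) : IntegrableOn (S.indicator fun _ => b) I μ :=
  IntegrableOn.indicator (integrableOn_const hI) hS

lemma setIntegral_indicator_const {ι : Type*} [MeasurableSpace ι] {μ : Measure ι} {S : Set ι}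
    (hS : MeasurableSet S) (I : Set ι) (b : ℝ) :
    ∫ x in I, S.indicator (fun _ => b) x ∂μ = b * μ.real (S ∩ I) := by
  rw [integral_indicator_const b hS, measureReal_restrict_apply hS, smul_eq_mul, mul_comm]

lemma setIntegral_indicator_const_add {ι : Type*} [MeasurableSpace ι] {μ : Measure ι}
    {S T I : Set ι} (hS : MeasurableSet S) (hT : MeasurableSet T) (hI : μ I ≠ ⊤) (b c : ℝ) :
    ∫ x in I, (S.indicator (fun _ => b) x + T.indicator (fun _ => c) x) ∂μ =
      b * μ.real (S ∩ I) + c * μ.real (T ∩ I) := by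
  rw [integral_add (integrableOn_indicator_const hS hI b) (integrableOn_indicator_const hT hI c),
    setIntegral_indicator_const hS, setIntegral_indicator_const hT]

lemma disjoint_spikeSet_Ico (hN : 0 < N) (m k : ℕ) (y α : ℝ) :
    Disjoint (spikeSet N m k y) (Ico y α) :=
  (Ico_disjoint_Ico_same (b := y)).mono_left (spikeSet_subset_Ico hN m k y)

lemma measurable_nearExtremal (N m k : ℕ) (y α l : ℝ) : Measurable (nearExtremal N m k y α l) :=
  (measurable_const.indicator (measurableSet_spikeSet N m k y)).add
    (measurable_const.indicator measurableSet_Ico)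

lemma nearExtremal_nonneg (hl : 0 ≤ l) (x : ℝ) : 0 ≤ nearExtremal N m k y α l x :=
  add_nonneg (indicator_nonneg (fun _ _ => by positivity) x) (indicator_nonneg (fun _ _ => hl) x)

lemma integrableOn_nearExtremal (N m k : ℕ) (y α l : ℝ) :
    IntegrableOn (nearExtremal N m k y α l) (Ico 0 1) :=
  (integrableOn_indicator_const (measurableSet_spikeSet N m k y) measure_Ico_lt_top.ne _).add
    (integrableOn_indicator_const measurableSet_Ico measure_Ico_lt_top.ne _)

lemma nearExtremal_le_of_notMem (hl : 0 ≤ l) (hx : x ∉ spikeSet N m k y) :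
    nearExtremal N m k y α l x ≤ l := by
  rw [nearExtremal, indicator_of_notMem hx, zero_add]
  exact indicator_le_self' (fun _ _ => hl) x

lemma nearExtremal_le (hN : 0 < N) (hl : 0 ≤ l) (x : ℝ) :
    nearExtremal N m k y α l x ≤ l * (N : ℝ) ^ k := by
  by_cases hx : x ∈ spikeSet N m k y
  · have hx' : x ∉ Ico y α := disjoint_left.1 (disjoint_spikeSet_Ico hN m k y α) hx
    rw [nearExtremal, indicator_of_mem hx, indicator_of_notMem hx', add_zero]
  · exact (nearExtremal_le_of_notMem hl hx).trans
      (le_mul_of_one_le_right hl (one_le_pow₀ (by exact_mod_cast hN)))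

lemma nearExtremal_rpow (hN : 0 < N) (hp : p ≠ 0) (hl : 0 ≤ l) (x : ℝ) :
    nearExtremal N m k y α l x ^ p =
      (spikeSet N m k y).indicator (fun _ => l ^ p * ((N : ℝ) ^ p) ^ k) x +
        (Ico y α).indicator (fun _ => l ^ p) x := by
  by_cases hx : x ∈ spikeSet N m k y
  · have hx' : x ∉ Ico y α := disjoint_left.1 (disjoint_spikeSet_Ico hN m k y α) hx
    rw [nearExtremal, indicator_of_mem hx, indicator_of_mem hx, indicator_of_notMem hx',
      indicator_of_notMem hx', add_zero, add_zero, Real.mul_rpow hl (by positivity),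
      Real.rpow_pow_comm (by positivity)]
  · rw [nearExtremal, indicator_of_notMem hx, indicator_of_notMem hx, zero_add, zero_add]
    by_cases hx' : x ∈ Ico y α
    · rw [indicator_of_mem hx', indicator_of_mem hx']
    · rw [indicator_of_notMem hx', indicator_of_notMem hx', Real.zero_rpow hp]

lemma volume_real_spikeSet_inter_Ico (hN : 0 < N) (m k : ℕ) (hy0 : 0 ≤ y) (hy1 : y ≤ 1) :
    volume.real (spikeSet N m k y ∩ Ico 0 1) = y / (N : ℝ) ^ k := by
  rw [inter_eq_self_of_subset_left ((spikeSet_subset_Ico hN m k y).trans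
    (Ico_subset_Ico_right hy1)), volume_real_spikeSet hN m k hy0 hy1]

lemma volume_real_Ico_inter_Ico (hy0 : 0 ≤ y) (hyα : y ≤ α) (hα : α ≤ 1) :
    volume.real (Ico y α ∩ Ico 0 1) = α - y := by
  rw [inter_eq_self_of_subset_left (Ico_subset_Ico hy0 hα), Real.volume_real_Ico_of_le hyα]

lemma setIntegral_nearExtremal (hN : 0 < N) (hy0 : 0 ≤ y) (hyα : y ≤ α) (hα : α ≤ 1) (l : ℝ) :
    ∫ x in Ico (0 : ℝ) 1, nearExtremal N m k y α l x = l * α := by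
  have hNk : (N : ℝ) ^ k ≠ 0 := by positivity
  unfold nearExtremal
  rw [setIntegral_indicator_const_add (measurableSet_spikeSet N m k y) measurableSet_Ico
    measure_Ico_lt_top.ne, volume_real_spikeSet_inter_Ico hN m k hy0 (hyα.trans hα),
    volume_real_Ico_inter_Ico hy0 hyα hα]
  field_simp
  ring

lemma setIntegral_nearExtremal_rpow (hN : 0 < N) (hp : p ≠ 0) (hl : 0 ≤ l) (hy0 : 0 ≤ y)
    (hyα : y ≤ α) (hα : α ≤ 1) :
    ∫ x in Ico (0 : ℝ) 1, nearExtremal N m k y α l x ^ p =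
      l ^ p * (α + y * (((N : ℝ) ^ p / N) ^ k - 1)) := by
  simp only [nearExtremal_rpow hN hp hl]
  rw [setIntegral_indicator_const_add (measurableSet_spikeSet N m k y) measurableSet_Ico
    measure_Ico_lt_top.ne, volume_real_spikeSet_inter_Ico hN m k hy0 (hyα.trans hα),
    volume_real_Ico_inter_Ico hy0 hyα hα, div_pow]
  ring

lemma setIntegral_adicItv_nearExtremal (hN : 0 < N) (hy0 : 0 ≤ y) (hyα : y ≤ α) (l : ℝ) (i : ℕ) :
    ∫ x in adicItv N m i, nearExtremal N m k y α l x =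
      l * volume.real (Ico 0 α ∩ adicItv N m i) := by
  have hNk : (N : ℝ) ^ k ≠ 0 := by positivity
  have hfin (a b : ℝ) : volume (Ico a b ∩ adicItv N m i) ≠ ⊤ :=
    measure_ne_top_of_subset inter_subset_left measure_Ico_lt_top.ne
  have hsplit : volume.real (Ico 0 α ∩ adicItv N m i) =
      volume.real (Ico 0 y ∩ adicItv N m i) + volume.real (Ico y α ∩ adicItv N m i) := by
    rw [← Ico_union_Ico_eq_Ico hy0 hyα, union_inter_distrib_right,
      measureReal_union (Ico_disjoint_Ico_same.mono inter_subset_left inter_subset_left)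
        (measurableSet_Ico.inter (measurableSet_adicItv N m i)) (hfin 0 y) (hfin y α)]
  unfold nearExtremal
  rw [setIntegral_indicator_const_add (measurableSet_spikeSet N m k y) measurableSet_Ico
    (by exact measure_Ico_lt_top.ne), volume_real_spikeSet_inter_adicItv hN, hsplit]
  field_simp

lemma levelAvg_nearExtremal_le (hN : 0 < N) (hl : 0 ≤ l) (hy0 : 0 ≤ y) (hyα : y ≤ α) (x : ℝ) :
    levelAvg N (nearExtremal N m k y α l) m x ≤ l := by
  have : (0 : ℝ) < (N : ℝ) ^ m := by positivity
  simp only [levelAvg, adicAvg, abs_of_nonneg (nearExtremal_nonneg hl _)]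
  rw [setIntegral_adicItv_nearExtremal hN hy0 hyα]
  calc (N : ℝ) ^ m * (l * volume.real (Ico 0 α ∩ adicItv N m (adicIndex N m x)))
      ≤ (N : ℝ) ^ m * (l * volume.real (adicItv N m (adicIndex N m x))) := by
        gcongr
        · exact measure_Ico_lt_top.ne
        · exact inter_subset_right
    _ = l := by
        rw [volume_real_adicItv]
        field_simp

lemma levelAvg_le_of_forall_mem_adicItv (hN : 0 < N) {φ : ℝ → ℝ} {C : ℝ}
    (hφ : IntegrableOn φ (Ico 0 1)) (hx : x < 1)
    (hC : ∀ w ∈ adicItv N m (adicIndex N m x), |φ w| ≤ C) : levelAvg N φ m x ≤ C := by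
  have : (0 : ℝ) < (N : ℝ) ^ m := by positivity
  rw [levelAvg, adicAvg]
  calc (N : ℝ) ^ m * ∫ w in adicItv N m (adicIndex N m x), |φ w|
      ≤ (N : ℝ) ^ m * ∫ _ in adicItv N m (adicIndex N m x), C := by
        gcongr (N : ℝ) ^ m * ?_
        exact setIntegral_mono_on
          (IntegrableOn.mono_set hφ.abs (adicItv_subset_Ico hN (adicIndex_lt hN hx)))
          (by simp [adicItv]) (measurableSet_adicItv N m _) hC
    _ = C := by
        rw [setIntegral_const, volume_real_adicItv, smul_eq_mul]
        field_simp

lemma adicMax_le_of_forall_levelAvg_le (hN : 0 < N) {φ : ℝ → ℝ} {C : ℝ} (hx : x ∈ Ico (0 : ℝ) 1)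
    (hC : ∀ m, levelAvg N φ m x ≤ C) : adicMax N φ x ≤ C :=
  adicMax_eq_iSup hN φ hx ▸ ciSup_le hC

lemma adicMax_nearExtremal_le (hN : 0 < N) (hl : 0 ≤ l) (hx : x ∈ Ico (0 : ℝ) 1) :
    adicMax N (nearExtremal N m k y α l) x ≤ l * (N : ℝ) ^ k :=
  adicMax_le_of_forall_levelAvg_le hN hx fun _ =>
    levelAvg_le_of_forall_mem_adicItv hN (integrableOn_nearExtremal N m k y α l) hx.2 fun w _ =>
      (abs_of_nonneg (nearExtremal_nonneg hl w)).trans_le (nearExtremal_le hN hl w)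

lemma adicMax_nearExtremal_le_of_notMem_spikeSet (hN : 0 < N) (hl : 0 ≤ l) (hy0 : 0 ≤ y)
    (hyα : y ≤ α) (hx : x ∈ Ico (0 : ℝ) 1) (hne : adicIndex N m x ≠ adicIndex N m y) (hjk : j < k)
    (hxj : x ∉ spikeSet N m (j + 1) y) :
    adicMax N (nearExtremal N m k y α l) x ≤ l * (N : ℝ) ^ j := by
  have hφ := integrableOn_nearExtremal N m k y α l
  have hlj : l ≤ l * (N : ℝ) ^ j :=
    le_mul_of_one_le_right hl (one_le_pow₀ (by exact_mod_cast hN))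
  have hcoarse (w : ℝ) (hw : w ∈ Ico (0 : ℝ) 1) :
      levelAvg N (nearExtremal N m k y α l) (m + j) w ≤ l * (N : ℝ) ^ j := by
    refine (levelAvg_add_le hN hφ m j hw.2).trans ?_
    rw [mul_comm]
    gcongr
    exact levelAvg_nearExtremal_le hN hl hy0 hyα w
  refine adicMax_le_of_forall_levelAvg_le hN hx fun n => ?_
  rcases le_or_gt n (m + j) with hn | hn
  · obtain ⟨i, hi⟩ := Nat.exists_eq_add_of_le hn
    exact levelAvg_le_of_forall_levelAvg_add_le hN hφ n i (fun w hw => hi ▸ hcoarse w hw) hx.2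
  · obtain ⟨i, rfl⟩ := Nat.exists_eq_add_of_lt hn
    refine (levelAvg_le_of_forall_mem_adicItv hN hφ hx.2 fun w hw => ?_).trans hlj
    have hwx : adicIndex N (m + (j + 1)) w = adicIndex N (m + (j + 1)) x := by
      have := adicIndex_eq_of_mem hN hw
      rw [add_right_comm] at this
      rw [← add_assoc, ← adicIndex_div hN _ i w, this, adicIndex_div hN]
    have hw0 := nonneg_of_mem_adicItv hw
    rw [abs_of_nonneg (nearExtremal_nonneg hl w)]
    exact nearExtremal_le_of_notMem hl fun hwk => hxj
      ((mem_spikeSet_iff_of_adicIndex_eq hN hx.1 hw0 hy0 hne hwx).1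
        (antitone_spikeSet hN m y hjk hwk))

end NearExtremalFunction

section SupMeasUpperBound

variable {N m k : ℕ} {p x y κ α l f F c ε : ℝ}

lemma le_add_sum_indicator_of_forall_notMem {ι : Type*} {u : ℕ → ℝ} (hu : Monotone u)
    {S : ℕ → Set ι} {x : ι} {v : ℝ} (hk : v ≤ u k) (h : ∀ j < k, x ∉ S (j + 1) → v ≤ u j) :
    v ≤ u 0 + ∑ j ∈ Finset.range k, (S (j + 1)).indicator (fun _ => u (j + 1) - u j) x := by
  induction k generalizing v with
  | zero => simpa using hk
  | succ k ih =>
    rw [Finset.sum_range_succ, ← add_assoc]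
    by_cases hx : x ∈ S (k + 1)
    · rw [indicator_of_mem hx, ← sub_le_iff_le_add]
      refine ih (by linarith) fun j hj hxj => ?_
      linarith [h j (by lia) hxj, hu (Nat.le_succ k)]
    · rw [indicator_of_notMem hx, add_zero]
      exact ih (h k (Nat.lt_succ_self k) hx) fun j hj => h j (by lia)

lemma monotone_const_mul_pow {a b : ℝ} (ha : 0 ≤ a) (hb : 1 ≤ b) :
    Monotone fun j : ℕ => a * b ^ j :=
  fun _ _ hij => mul_le_mul_of_nonneg_left (pow_le_pow_right₀ hb hij) ha

lemma one_le_natCast_rpow (hN : 0 < N) (hp : 0 ≤ p) : 1 ≤ (N : ℝ) ^ p :=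
  Real.one_le_rpow (by exact_mod_cast hN) hp

lemma adicMax_rpow_le_of_adicMax_le {φ : ℝ → ℝ} {j : ℕ} (hp : 0 ≤ p) (hl : 0 ≤ l)
    (h : adicMax N φ x ≤ l * (N : ℝ) ^ j) : adicMax N φ x ^ p ≤ l ^ p * ((N : ℝ) ^ p) ^ j := by
  rw [Real.rpow_pow_comm (by positivity), ← Real.mul_rpow hl (by positivity)]
  exact Real.rpow_le_rpow (adicMax_nonneg N φ x) h hp

/-- A majorant of `(adicMax N (nearExtremal N m k y α l)) ^ p`: the spikes of generation `j` carry
the height `l N^j`, and the level-`m` interval containing `y` the maximal height `l N^k`. -/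
noncomputable def nearExtremalMajorant (N m k : ℕ) (p y l x : ℝ) : ℝ :=
  l ^ p + (∑ j ∈ Finset.range k, (spikeSet N m (j + 1) y).indicator
    (fun _ => l ^ p * ((N : ℝ) ^ p) ^ (j + 1) - l ^ p * ((N : ℝ) ^ p) ^ j) x) +
    (adicItv N m (adicIndex N m y)).indicator (fun _ => l ^ p * ((N : ℝ) ^ p) ^ k) x

lemma adicMax_nearExtremal_rpow_le (hN : 0 < N) (hp : 0 ≤ p) (hl : 0 ≤ l) (hy0 : 0 ≤ y)
    (hyα : y ≤ α) (hx : x ∈ Ico (0 : ℝ) 1) :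
    adicMax N (nearExtremal N m k y α l) x ^ p ≤ nearExtremalMajorant N m k p y l x := by
  have hmono : Monotone fun j : ℕ => l ^ p * ((N : ℝ) ^ p) ^ j :=
    monotone_const_mul_pow (Real.rpow_nonneg hl p) (one_le_natCast_rpow hN hp)
  have hpk := adicMax_rpow_le_of_adicMax_le hp hl
    (adicMax_nearExtremal_le (m := m) (k := k) (y := y) (α := α) hN hl hx)
  by_cases hne : adicIndex N m x = adicIndex N m y
  · have hmem : x ∈ adicItv N m (adicIndex N m y) := hne ▸ mem_adicItv_adicIndex hN hx.1
    rw [nearExtremalMajorant, indicator_of_mem hmem]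
    refine hpk.trans (le_add_of_nonneg_left (add_nonneg (Real.rpow_nonneg hl p) ?_))
    exact Finset.sum_nonneg fun j _ =>
      indicator_nonneg (fun _ _ => sub_nonneg.2 (hmono (Nat.le_succ j))) x
  · have hle := le_add_sum_indicator_of_forall_notMem hmono (S := fun j => spikeSet N m j y) hpk
      fun j hj hxj => adicMax_rpow_le_of_adicMax_le hp hl
        (adicMax_nearExtremal_le_of_notMem_spikeSet hN hl hy0 hyα hx hne hj hxj)
    simp only [pow_zero, mul_one] at hle
    exact hle.trans (le_add_of_nonneg_right (indicator_nonneg (fun _ _ => by positivity) x))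

lemma integrableOn_nearExtremalMajorant {E : Set ℝ} (hE : volume E ≠ ⊤) (N m k : ℕ) (p y l : ℝ) :
    IntegrableOn (nearExtremalMajorant N m k p y l) E :=
  (IntegrableOn.add (integrableOn_const hE) (integrable_finsetSum _ fun j _ =>
    integrableOn_indicator_const (measurableSet_spikeSet N m (j + 1) y) hE _)).add
      (integrableOn_indicator_const (measurableSet_adicItv N m _) hE _)

lemma setIntegral_nearExtremalMajorant {E : Set ℝ} (hE : volume E ≠ ⊤) (N m k : ℕ) (p y l : ℝ) :
    ∫ x in E, nearExtremalMajorant N m k p y l x =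
      l ^ p * volume.real E + (∑ j ∈ Finset.range k,
        (l ^ p * ((N : ℝ) ^ p) ^ (j + 1) - l ^ p * ((N : ℝ) ^ p) ^ j) *
          volume.real (spikeSet N m (j + 1) y ∩ E)) +
      l ^ p * ((N : ℝ) ^ p) ^ k * volume.real (adicItv N m (adicIndex N m y) ∩ E) := by
  have hspike (j : ℕ) := integrableOn_indicator_const (measurableSet_spikeSet N m (j + 1) y) hE
    (l ^ p * ((N : ℝ) ^ p) ^ (j + 1) - l ^ p * ((N : ℝ) ^ p) ^ j)
  have hconst : IntegrableOn (fun _ => l ^ p) E := integrableOn_const hE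
  have hsum := integrable_finsetSum (Finset.range k) fun j _ => hspike j
  have hitv := integrableOn_indicator_const (measurableSet_adicItv N m (adicIndex N m y)) hE
    (l ^ p * ((N : ℝ) ^ p) ^ k)
  simp only [nearExtremalMajorant]
  rw [integral_add _ hitv, integral_add hconst hsum, integral_finsetSum _ fun j _ => hspike j,
    setIntegral_const, setIntegral_indicator_const (measurableSet_adicItv N m _), smul_eq_mul,
    mul_comm (volume.real E)]
  · simp only [setIntegral_indicator_const (measurableSet_spikeSet N m _ y)]
  · exact IntegrableOn.add hconst hsum

lemma setIntegral_nearExtremalMajorant_le {E : Set ℝ} (hN : 1 < N) (hp : 1 < p) (hl : 0 ≤ l)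
    (hy0 : 0 ≤ y) (hy1 : y ≤ 1) (hE : volume E ≠ ⊤) :
    ∫ x in E, nearExtremalMajorant N m k p y l x ≤
      l ^ p * (volume.real E + homogConst N p * (y * (((N : ℝ) ^ p / N) ^ k - 1))) +
        l ^ p * ((N : ℝ) ^ p) ^ k / (N : ℝ) ^ m := by
  have hN0 : 0 < N := by lia
  have hinc (j : ℕ) : 0 ≤ l ^ p * ((N : ℝ) ^ p) ^ (j + 1) - l ^ p * ((N : ℝ) ^ p) ^ j :=
    sub_nonneg.2 (monotone_const_mul_pow (Real.rpow_nonneg hl p)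
      (one_le_natCast_rpow hN0 (by linarith)) (Nat.le_succ j))
  have hspikes : ∑ j ∈ Finset.range k,
      (l ^ p * ((N : ℝ) ^ p) ^ (j + 1) - l ^ p * ((N : ℝ) ^ p) ^ j) *
        volume.real (spikeSet N m (j + 1) y ∩ E) ≤
      l ^ p * (homogConst N p * (y * (((N : ℝ) ^ p / N) ^ k - 1))) := by
    rw [mul_left_comm (homogConst N p) y, ← homogConst_mul_geom (by exact_mod_cast hN) hp k,
      Finset.mul_sum, Finset.mul_sum]
    refine Finset.sum_le_sum fun j _ => ?_
    calc (l ^ p * ((N : ℝ) ^ p) ^ (j + 1) - l ^ p * ((N : ℝ) ^ p) ^ j) *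
          volume.real (spikeSet N m (j + 1) y ∩ E)
        ≤ (l ^ p * ((N : ℝ) ^ p) ^ (j + 1) - l ^ p * ((N : ℝ) ^ p) ^ j) *
          volume.real (spikeSet N m (j + 1) y) :=
          mul_le_mul_of_nonneg_left (measureReal_mono inter_subset_left (measure_ne_top_of_subset
            (spikeSet_subset_Ico hN0 m _ y) measure_Ico_lt_top.ne)) (hinc j)
      _ = _ := by rw [volume_real_spikeSet hN0 m _ hy0 hy1]; ring
  have hitv : l ^ p * ((N : ℝ) ^ p) ^ k * volume.real (adicItv N m (adicIndex N m y) ∩ E) ≤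
      l ^ p * ((N : ℝ) ^ p) ^ k / (N : ℝ) ^ m := by
    rw [← mul_one_div, ← volume_real_adicItv N m (adicIndex N m y)]
    gcongr
    · exact measure_Ico_lt_top.ne
    · exact inter_subset_left
  rw [setIntegral_nearExtremalMajorant hE, mul_add]
  gcongr

lemma supMeas_nearExtremal_le (hN : 1 < N) (hp : 1 < p) (hl : 0 ≤ l) (hy0 : 0 ≤ y) (hyα : y ≤ α)
    (hα : α ≤ 1) (hκ0 : 0 ≤ κ) (hκ1 : κ ≤ 1) :
    supMeas N p κ (nearExtremal N m k y α l) ≤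
      l ^ p * (κ + homogConst N p * (y * (((N : ℝ) ^ p / N) ^ k - 1))) +
        l ^ p * ((N : ℝ) ^ p) ^ k / (N : ℝ) ^ m := by
  have hN0 : 0 < N := by lia
  refine csSup_le ⟨_, Ico 0 κ, measurableSet_Ico, Ico_subset_Ico_right hκ1, by simp, rfl⟩ ?_
  rintro _ ⟨E, hE, hE01, hEκ, rfl⟩
  have hEfin : volume E ≠ ⊤ := hEκ ▸ ENNReal.ofReal_ne_top
  have hEreal : volume.real E = κ := by rw [measureReal_def, hEκ, ENNReal.toReal_ofReal hκ0]
  calc ∫ x in E, adicMax N (nearExtremal N m k y α l) x ^ p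
      ≤ ∫ x in E, nearExtremalMajorant N m k p y l x :=
        integral_mono_of_nonneg (ae_of_all _ fun x => Real.rpow_nonneg (adicMax_nonneg N _ x) p)
          (integrableOn_nearExtremalMajorant hEfin N m k p y l)
          ((ae_restrict_mem hE).mono fun x hx =>
            adicMax_nearExtremal_rpow_le hN0 (by linarith) hl hy0 hyα (hE01 hx))
    _ ≤ _ := hEreal ▸ setIntegral_nearExtremalMajorant_le hN hp hl hy0 (hyα.trans hα) hEfin

lemma exists_mul_pow_sub_one_eq {a b Q : ℝ} (hQ : 1 < Q) (ha : 0 < a) (hb : 0 ≤ b) :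
    ∃ k : ℕ, ∃ y, 0 ≤ y ∧ y ≤ a ∧ y * (Q ^ k - 1) = b := by
  obtain ⟨k, hk⟩ := pow_unbounded_of_one_lt (b / a + 1) hQ
  have hba : b / a < Q ^ k - 1 := by linarith
  have hpos : 0 < Q ^ k - 1 := (div_nonneg hb ha.le).trans_lt hba
  exact ⟨k, b / (Q ^ k - 1), div_nonneg hb hpos.le, (div_lt_comm₀ ha hpos).1 hba |>.le,
    div_mul_cancel₀ b hpos.ne'⟩

theorem exists_supMeas_lt (hN : 1 < N) (hp : 1 < p) (hl : 0 < l) (hα0 : 0 < α) (hα1 : α ≤ 1)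
    (hF : l ^ p * α ≤ F) (hκ0 : 0 ≤ κ) (hκ1 : κ ≤ 1) (hε : 0 < ε) :
    ∃ φ : ℝ → ℝ, Measurable φ ∧ (∀ x, 0 ≤ φ x) ∧ (∫ x in Ico (0 : ℝ) 1, φ x = l * α) ∧
      (∫ x in Ico (0 : ℝ) 1, φ x ^ p = F) ∧
      supMeas N p κ φ < l ^ p * κ + homogConst N p * (F - l ^ p * α) + ε := by
  have hN0 : 0 < N := by lia
  have hN1 : (1 : ℝ) < N := by exact_mod_cast hN
  have hlp : 0 < l ^ p := Real.rpow_pos_of_pos hl p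
  have hQ : 1 < (N : ℝ) ^ p / N :=
    (one_lt_div (by positivity)).2 (Real.self_lt_rpow_of_one_lt hN1 hp)
  obtain ⟨k, y, hy0, hyα, hy⟩ := exists_mul_pow_sub_one_eq hQ hα0
    (div_nonneg (sub_nonneg.2 hF) hlp.le)
  obtain ⟨m, hm⟩ := pow_unbounded_of_one_lt (l ^ p * ((N : ℝ) ^ p) ^ k / ε) hN1
  refine ⟨nearExtremal N m k y α l, measurable_nearExtremal N m k y α l,
    fun x => nearExtremal_nonneg hl.le x, setIntegral_nearExtremal hN0 hy0 hyα hα1 l, ?_, ?_⟩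
  · rw [setIntegral_nearExtremal_rpow hN0 (by linarith) hl.le hy0 hyα hα1, hy]
    field_simp
    ring
  · have hmε : l ^ p * ((N : ℝ) ^ p) ^ k / (N : ℝ) ^ m < ε :=
      (div_lt_comm₀ hε (by positivity)).1 hm
    calc supMeas N p κ (nearExtremal N m k y α l)
        ≤ _ := supMeas_nearExtremal_le hN hp hl.le hy0 hyα hα1 hκ0 hκ1
      _ < l ^ p * (κ + homogConst N p * (y * (((N : ℝ) ^ p / N) ^ k - 1))) + ε := by gcongr
      _ = l ^ p * κ + homogConst N p * (F - l ^ p * α) + ε := by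
          rw [hy]
          field_simp

lemma scale_rpow_mul_le (hp : 1 < p) (hf : 0 < f) (hF : 0 < F) (hc : 0 < c)
    (hκ0 : 0 < κ) (hκ : c * (f ^ p / F) ^ (1 / (p - 1)) ≤ κ) : (c * f / κ) ^ p * (κ / c) ≤ F := by
  have hp1 : 0 < p - 1 := by linarith
  have hα : (f ^ p / F) ^ (p - 1)⁻¹ ≤ κ / c := by
    rwa [le_div_iff₀' hc, ← one_div]
  rw [Real.rpow_inv_le_iff_of_pos (by positivity) (by positivity) hp1, div_le_comm₀ hF
    (by positivity)] at hα
  calc (c * f / κ) ^ p * (κ / c) = f ^ p / (κ / c) ^ (p - 1) := by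
        rw [rpow_eq_rpow_sub_one_mul hp (by positivity : 0 ≤ c * f / κ),
          rpow_eq_rpow_sub_one_mul hp hf.le, Real.div_rpow (by positivity) hκ0.le,
          Real.mul_rpow hc.le hf.le, Real.div_rpow hκ0.le hc.le]
        field_simp
    _ ≤ F := hα

theorem exists_supMeas_lt_of_homogConst_mul_sub_lt {v : ℝ} (hN : 1 < N) (hp : 1 < p)
    (hc : c = (p - 1) / p * homogConst N p) (hf : 0 < f) (hF : 0 < F) (hκ0 : 0 < κ)
    (hκ1 : c * (f ^ p / F) ^ (1 / (p - 1)) ≤ κ) (hκ2 : κ ≤ c)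
    (hv : homogConst N p * (F - c ^ (p - 1) * f ^ p / (p * κ ^ (p - 1))) < v) :
    ∃ φ : ℝ → ℝ, Measurable φ ∧ (∀ x, 0 ≤ φ x) ∧ (∫ x in Ico (0 : ℝ) 1, φ x = f) ∧
      (∫ x in Ico (0 : ℝ) 1, φ x ^ p = F) ∧ supMeas N p κ φ < v := by
  have hN1 : (1 : ℝ) < N := by exact_mod_cast hN
  have hc0 : 0 < c := hκ0.trans_le hκ2
  have hκ : κ ≤ 1 := hκ2.trans (hc ▸ sub_one_div_mul_homogConst_le_one hN1 hp)
  obtain ⟨φ, hφ, hφ0, hmean, hmoment, hsup⟩ := exists_supMeas_lt hN hp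
    (by positivity : 0 < c * f / κ) (div_pos hκ0 hc0) ((div_le_one hc0).2 hκ2)
    (scale_rpow_mul_le hp hf hF hc0 hκ0 hκ1) hκ0.le hκ (sub_pos.2 hv)
  have hf' : c * f / κ * (κ / c) = f := by field_simp
  have hmass : (c * f / κ) ^ p * (κ / c) = (c * f / κ) ^ (p - 1) * f := by
    rw [rpow_eq_rpow_sub_one_mul hp (by positivity : 0 ≤ c * f / κ), mul_assoc, hf']
  rw [mul_sub_div_eq_of_eq_div hp hf hκ0 (homogConst_pos hN1 hp) hc, hmass] at hsup
  exact ⟨φ, hφ, hφ0, hmean.trans hf', hmoment, by linarith⟩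

end SupMeasUpperBound

theorem stmt3 (N : ℕ) (hN : 2 ≤ N) (p f F κ c : ℝ) (hp : 1 < p)
    (hf : 0 < f) (hF : 0 < F) (hfF : f ^ p ≤ F)
    (hc : c = ((p - 1) / p) * (((N : ℝ) ^ p - 1) / ((N : ℝ) ^ p - N)))
    (hκ1 : c * (f ^ p / F) ^ (1 / (p - 1)) ≤ κ) (hκ2 : κ ≤ c) :
    Dp N p F f κ =
      (((N : ℝ) ^ p - 1) / ((N : ℝ) ^ p - N)) *
        (F - c ^ (p - 1) * f ^ p / (p * κ ^ (p - 1))) := by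
  change c = (p - 1) / p * homogConst N p at hc
  change Dp N p F f κ = homogConst N p * (F - c ^ (p - 1) * f ^ p / (p * κ ^ (p - 1)))
  have hN1 : (1 : ℝ) < N := by exact_mod_cast hN
  have hc0 : 0 < c := hc ▸ mul_pos (div_pos (by linarith) (by linarith)) (homogConst_pos hN1 hp)
  have hκ0 : 0 < κ := (by positivity : 0 < c * (f ^ p / F) ^ (1 / (p - 1))).trans_le hκ1
  have hκ : κ ≤ 1 := hκ2.trans (hc ▸ sub_one_div_mul_homogConst_le_one hN1 hp)
  refine csInf_eq_of_forall_ge_of_forall_gt_exists_lt ?_ ?_ fun v hv => ?_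
  · obtain ⟨φ, hφ, hφ0, hf', hF', -⟩ :=
      exists_supMeas_lt_of_homogConst_mul_sub_lt hN hp hc hf hF hκ0 hκ1 hκ2 (lt_add_one _)
    exact ⟨_, φ, hφ, fun x _ => hφ0 x, hf', hF', rfl⟩
  · rintro _ ⟨φ, -, hφ0, hf', hF', rfl⟩
    exact homogConst_mul_sub_le_supMeas hN hp hc hκ0 hκ hf hF hφ0 hf' hF'
  · obtain ⟨φ, hφ, hφ0, hf', hF', hlt⟩ :=
      exists_supMeas_lt_of_homogConst_mul_sub_lt hN hp hc hf hF hκ0 hκ1 hκ2 hv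
    exact ⟨_, ⟨φ, hφ, fun x _ => hφ0 x, hf', hF', rfl⟩, hlt⟩
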